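/- Let a ≥ 0 and let (q,r) be an a-admissible pair, with conjugate exponents q', r'. There exists a constant C(a,r) > 0 such that for every F ∈ 𝕊⁺ one has the restriction estimate (∫₀^∞ |𝓗̃_{(a−1)/2}(F)(ξ, −ξ²/(2π))|² ξ^a dξ)^{1/2} ≤ C(a,r) ‖F‖_{L^{q'}_t L^{r'}_a}. -/

import Mathlib

open MeasureTheory Filter Set

noncomputable def besselJ (ν : ℂ) (z : ℝ) : ℂ :=
  ∑' k : ℕ, ((-1 : ℂ) ^ k / (Complex.Gamma (k + 1) * Complex.Gamma (ν + k + 1))) *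
    ((z : ℂ) / 2) ^ (2 * (k : ℂ) + ν)

noncomputable def hankel (ν : ℂ) (φ : ℝ → ℂ) (x : ℝ) : ℂ :=
  (x : ℂ) ^ (-ν) * ∫ y in Ioi (0:ℝ), φ y * besselJ ν (x * y) * (y : ℂ) ^ (ν + 1)

noncomputable def LrA (a r : ℝ) (f : ℝ → ℂ) : ℝ :=
  (∫ x in Ioi (0:ℝ), ‖f x‖ ^ r * x ^ a) ^ (1 / r)

noncomputable def mixedNorm (a q r : ℝ) (u : ℝ → ℝ → ℂ) : ℝ :=
  (∫ t : ℝ, LrA a r (fun x => u x t) ^ q) ^ (1 / q)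

def Admissible (a q r : ℝ) : Prop :=
  2 < r ∧ (1 < a → r < 2 * (a + 1) / (a - 1)) ∧ 2 / q = (a + 1) * (1 / 2 - 1 / r)

noncomputable def DxIter : ℕ → (ℝ → ℝ → ℂ) → (ℝ → ℝ → ℂ)
  | 0, F => F
  | k + 1, F => fun x t => (1 / (x : ℂ)) * deriv (fun x' => DxIter k F x' t) x

noncomputable def DtIter (l : ℕ) (F : ℝ → ℝ → ℂ) : ℝ → ℝ → ℂ :=
  fun x t => iteratedDeriv l (fun t' => F x t') t

def SPlusT (F : ℝ → ℝ → ℂ) : Prop :=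
  ContDiffOn ℝ (⊤ : ℕ∞) (fun p : ℝ × ℝ => F p.1 p.2) (Ioi 0 ×ˢ univ) ∧
  ∀ p : ℕ, ∃ C : ℝ, ∀ k l : ℕ, k + l ≤ p → ∀ x > (0:ℝ), ∀ t : ℝ,
    (1 + x ^ 2 + t ^ 2) ^ ((p : ℝ) / 2) * ‖DxIter k (DtIter l F) x t‖ ≤ C

noncomputable def fourierHankel (ν : ℂ) (u : ℝ → ℝ → ℂ) (ξ τ : ℝ) : ℂ :=
  ∫ t : ℝ, Complex.exp (-(((2 * Real.pi * τ * t : ℝ)) : ℂ) * Complex.I) *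
    hankel ν (fun x => u x t) ξ

/-- The coefficients of the entire function `w ↦ ∑ w ^ k / (k! Γ(b + k))`. -/
noncomputable def besselCoeff (b : ℝ) (k : ℕ) : ℝ :=
  1 / ((k.factorial : ℝ) * Real.Gamma (b + k))

/-- The entire function `∑ w ^ k / (k! Γ(b + k))`, which satisfies
`J_ν(z) = (z / 2) ^ ν * besselE (ν + 1) (-z ^ 2 / 4)`. -/
noncomputable def besselE (b : ℝ) (w : ℂ) : ℂ :=
  ∑' k : ℕ, (besselCoeff b k : ℂ) * w ^ k

lemma Gamma_add_nat_pos {b : ℝ} (hb : 0 < b) (k : ℕ) : 0 < Real.Gamma (b + k) :=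
  Real.Gamma_pos_of_pos (by positivity)

lemma besselCoeff_pos {b : ℝ} (hb : 0 < b) (k : ℕ) : 0 < besselCoeff b k := by
  have := Gamma_add_nat_pos hb k
  unfold besselCoeff
  positivity

lemma Gamma_div_two_pow_le {b : ℝ} (hb : 1 / 2 ≤ b) (k : ℕ) :
    Real.Gamma b / 2 ^ k ≤ Real.Gamma (b + k) := by
  induction k with
  | zero => simp
  | succ k ih =>
    have h := Gamma_add_nat_pos (by linarith : 0 < b) k
    have hk : (0 : ℝ) ≤ k := k.cast_nonneg
    have e : Real.Gamma (b + (k + 1 : ℕ)) = (b + k) * Real.Gamma (b + k) := by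
      rw [← Real.Gamma_add_one (by positivity)]
      push_cast
      ring_nf
    rw [e, pow_succ, ← div_div]
    nlinarith

lemma besselCoeff_le {b : ℝ} (hb : 1 / 2 ≤ b) (k : ℕ) :
    besselCoeff b k ≤ (Real.Gamma b)⁻¹ * (2 ^ k / k.factorial) := by
  have h0 : 0 < Real.Gamma b := Real.Gamma_pos_of_pos (by linarith)
  have h := Gamma_div_two_pow_le hb k
  unfold besselCoeff
  calc 1 / ((k.factorial : ℝ) * Real.Gamma (b + k))
      ≤ 1 / ((k.factorial : ℝ) * (Real.Gamma b / 2 ^ k)) := by gcongr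
    _ = _ := by field_simp

lemma summable_besselCoeff {b : ℝ} (hb : 1 / 2 ≤ b) {x : ℝ} (hx : 0 ≤ x) :
    Summable fun k => besselCoeff b k * x ^ k := by
  refine Summable.of_nonneg_of_le
    (fun k => mul_nonneg (besselCoeff_pos (by linarith) k).le (by positivity)) (fun k => ?_)
    ((Real.summable_pow_div_factorial (2 * x)).mul_left (Real.Gamma b)⁻¹)
  calc besselCoeff b k * x ^ k
      ≤ (Real.Gamma b)⁻¹ * (2 ^ k / k.factorial) * x ^ k := by gcongr; exact besselCoeff_le hb k
    _ = _ := by rw [mul_pow]; ring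

lemma norm_besselTerm {b : ℝ} (hb : 0 < b) (w : ℂ) (k : ℕ) :
    ‖(besselCoeff b k : ℂ) * w ^ k‖ = besselCoeff b k * ‖w‖ ^ k := by
  rw [norm_mul, norm_pow, Complex.norm_real, Real.norm_of_nonneg (besselCoeff_pos hb k).le]

lemma summable_norm_besselTerm {b : ℝ} (hb : 1 / 2 ≤ b) (w : ℂ) :
    Summable fun k => ‖(besselCoeff b k : ℂ) * w ^ k‖ := by
  simp_rw [norm_besselTerm (by linarith : 0 < b)]
  exact summable_besselCoeff hb (norm_nonneg w)

lemma Gamma_nat_add_half_mul (k : ℕ) :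
    Real.Gamma (1 / 2 + k) * (4 ^ k * k.factorial) = (2 * k).factorial * Real.Gamma (1 / 2) := by
  induction k with
  | zero => simp
  | succ k ih =>
    have e : Real.Gamma (1 / 2 + (k + 1 : ℕ)) = (1 / 2 + k) * Real.Gamma (1 / 2 + k) := by
      rw [← Real.Gamma_add_one (by positivity)]
      push_cast
      ring_nf
    have f : ((2 * (k + 1)).factorial : ℝ) = (2 * k + 2) * (2 * k + 1) * (2 * k).factorial := by
      rw [show 2 * (k + 1) = 2 * k + 1 + 1 by ring, Nat.factorial_succ, Nat.factorial_succ]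
      push_cast
      ring
    rw [e, f, Nat.factorial_succ]
    push_cast
    linear_combination (2 * (k : ℝ) + 2) * (2 * k + 1) * ih

/-- The normalised coefficients form a Hausdorff moment sequence. -/
lemma exists_moment_measure {b : ℝ} (hb : 1 / 2 ≤ b) :
    ∃ ρ : Measure ℝ, IsProbabilityMeasure ρ ∧ (∀ᵐ s ∂ρ, s ∈ Icc (0 : ℝ) 1) ∧
      ∀ k : ℕ, ∫ s, s ^ k ∂ρ =
        Real.Gamma (1 / 2 + k) * Real.Gamma b / (Real.Gamma (1 / 2) * Real.Gamma (b + k)) := by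
  rcases hb.eq_or_lt with rfl | hb'
  · refine ⟨Measure.dirac 1, inferInstance, by simp [ae_dirac_eq], fun k => ?_⟩
    have h1 : 0 < Real.Gamma (1 / 2) := Real.Gamma_pos_of_pos (by norm_num)
    have h2 := Gamma_add_nat_pos (by norm_num : (0 : ℝ) < 1 / 2) k
    rw [integral_dirac, one_pow, mul_comm, div_self (by positivity)]
  · have hβ : 0 < b - 1 / 2 := by linarith
    have hα : (0 : ℝ) < 1 / 2 := by norm_num
    refine ⟨ProbabilityTheory.betaMeasure (1 / 2) (b - 1 / 2),
      ProbabilityTheory.isProbabilityMeasureBeta hα hβ, ?_, fun k => ?_⟩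
    · have : Measurable (ProbabilityTheory.betaPDF (1 / 2) (b - 1 / 2)) :=
        (ProbabilityTheory.measurable_betaPDFReal _ _).ennreal_ofReal
      rw [ProbabilityTheory.betaMeasure, ae_withDensity_iff this]
      refine ae_of_all _ fun s hs => ?_
      by_contra hc
      rw [mem_Icc, not_and_or, not_le, not_le] at hc
      rcases hc with hc | hc
      · exact hs (ProbabilityTheory.betaPDF_eq_zero_of_nonpos hc.le)
      · exact hs (ProbabilityTheory.betaPDF_eq_zero_of_one_le hc.le)
    · have hαk : (0 : ℝ) < 1 / 2 + k := by positivity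
      have hone : ∫ s, ProbabilityTheory.betaPDFReal (1 / 2 + k) (b - 1 / 2) s = 1 := by
        rw [integral_eq_lintegral_of_nonneg_ae]
        · have := ProbabilityTheory.lintegral_betaPDF_eq_one hαk hβ
          unfold ProbabilityTheory.betaPDF at this
          rw [this, ENNReal.toReal_one]
        · refine ae_of_all _ fun s => ?_
          by_cases hs : 0 < s ∧ s < 1
          · exact (ProbabilityTheory.betaPDFReal_pos hs.1 hs.2 hαk hβ).le
          · simp [ProbabilityTheory.betaPDFReal, hs]
        · exact (ProbabilityTheory.measurable_betaPDFReal _ _).aestronglyMeasurable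
      rw [ProbabilityTheory.betaMeasure]
      unfold ProbabilityTheory.betaPDF
      rw [integral_withDensity_eq_integral_toReal_smul
        (ProbabilityTheory.measurable_betaPDFReal _ _).ennreal_ofReal
        (ae_of_all _ fun _ => ENNReal.ofReal_lt_top)]
      have key : ∀ s : ℝ,
          (ENNReal.ofReal (ProbabilityTheory.betaPDFReal (1 / 2) (b - 1 / 2) s)).toReal • s ^ k =
          (ProbabilityTheory.beta (1 / 2 + k) (b - 1 / 2) /
            ProbabilityTheory.beta (1 / 2) (b - 1 / 2)) *
            ProbabilityTheory.betaPDFReal (1 / 2 + k) (b - 1 / 2) s := by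
        intro s
        by_cases hs : 0 < s ∧ s < 1
        · rw [ENNReal.toReal_ofReal (ProbabilityTheory.betaPDFReal_pos hs.1 hs.2 hα hβ).le]
          have h1 := ProbabilityTheory.beta_pos hα hβ
          have h2 := ProbabilityTheory.beta_pos hαk hβ
          simp only [ProbabilityTheory.betaPDFReal, hs, and_self, if_true, smul_eq_mul]
          rw [show (1 / 2 + (k : ℝ) - 1) = (1 / 2 - 1) + k by ring, Real.rpow_add_natCast hs.1.ne']
          generalize ProbabilityTheory.beta (1 / 2) (b - 1 / 2) = β₁ at *
          generalize ProbabilityTheory.beta (1 / 2 + k) (b - 1 / 2) = β₂ at *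
          field_simp
        · simp [ProbabilityTheory.betaPDFReal, hs]
      simp_rw [key]
      rw [integral_const_mul, hone, mul_one]
      unfold ProbabilityTheory.beta
      rw [show (1 / 2 : ℝ) + (b - 1 / 2) = b by ring,
        show 1 / 2 + (k : ℝ) + (b - 1 / 2) = b + k by ring]
      have h1 : 0 < Real.Gamma (1 / 2) := Real.Gamma_pos_of_pos (by norm_num)
      have h2 := Real.Gamma_pos_of_pos hβ
      have h3 := Gamma_add_nat_pos (by linarith : 0 < b) k
      have h4 : 0 < Real.Gamma b := Real.Gamma_pos_of_pos (by linarith)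
      generalize Real.Gamma (b - 1 / 2) = g at *
      generalize Real.Gamma (1 / 2 + k) = g' at *
      field_simp

/-- The bound `|E(z² / 4)| ≤ E(0) e^{|Re z|}`, from the Poisson integral representation. -/
lemma norm_besselE_sq_le {b : ℝ} (hb : 1 / 2 ≤ b) (z : ℂ) :
    ‖besselE b (z ^ 2 / 4)‖ ≤ (Real.Gamma b)⁻¹ * Real.exp |z.re| := by
  obtain ⟨ρ, hρ, hsupp, hmom⟩ := exists_moment_measure hb
  have hΓ : 0 < Real.Gamma b := Real.Gamma_pos_of_pos (by linarith)
  have hterm : ∀ k : ℕ, (besselCoeff b k : ℂ) * (z ^ 2 / 4) ^ k =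
      ((Real.Gamma b)⁻¹ : ℝ) *
        ∫ s, (z * (Real.sqrt s : ℂ)) ^ (2 * k) / ((2 * k).factorial : ℂ) ∂ρ := by
    intro k
    have h1 : ∫ s, (z * (Real.sqrt s : ℂ)) ^ (2 * k) / ((2 * k).factorial : ℂ) ∂ρ =
        ∫ s, (z ^ (2 * k) / ((2 * k).factorial : ℂ)) * ((s ^ k : ℝ) : ℂ) ∂ρ := by
      refine integral_congr_ae ?_
      filter_upwards [hsupp] with s hs
      rw [mul_pow, pow_mul (Real.sqrt s : ℂ), ← Complex.ofReal_pow (Real.sqrt s),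
        Real.sq_sqrt hs.1]
      push_cast
      ring
    rw [h1, integral_const_mul, integral_complex_ofReal, hmom]
    have h2 := Gamma_nat_add_half_mul k
    have h3 : 0 < Real.Gamma (1 / 2) := Real.Gamma_pos_of_pos (by norm_num)
    have h4 := Gamma_add_nat_pos (by linarith : 0 < b) k
    have h5 : besselCoeff b k = (Real.Gamma b)⁻¹ * (4 ^ k * (Real.Gamma (1 / 2 + k) *
        Real.Gamma b / (Real.Gamma (1 / 2) * Real.Gamma (b + k))) / (2 * k).factorial) := by
      unfold besselCoeff
      generalize Real.Gamma (1 / 2 + k) = g at *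
      field_simp
      linear_combination (-1 : ℝ) * h2
    rw [h5]
    push_cast
    rw [div_pow, ← pow_mul]
    field_simp
  have hsum : besselE b (z ^ 2 / 4) =
      ((Real.Gamma b)⁻¹ : ℝ) * ∫ s, Complex.cosh (z * (Real.sqrt s : ℂ)) ∂ρ := by
    unfold besselE
    simp_rw [hterm]
    rw [tsum_mul_left]
    congr 1
    have hF : HasSum (fun k : ℕ =>
        ∫ s, (z * (Real.sqrt s : ℂ)) ^ (2 * k) / ((2 * k).factorial : ℂ) ∂ρ)
        (∫ s, Complex.cosh (z * (Real.sqrt s : ℂ)) ∂ρ) := by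
      refine hasSum_integral_of_dominated_convergence
        (bound := fun k _ => ‖z‖ ^ (2 * k) / (2 * k).factorial) ?_ ?_ ?_ ?_ ?_
      · intro k
        exact Measurable.aestronglyMeasurable (by fun_prop)
      · intro k
        filter_upwards [hsupp] with s hs
        rw [norm_div, norm_pow, norm_mul, Complex.norm_natCast, Complex.norm_real,
          Real.norm_of_nonneg (Real.sqrt_nonneg s)]
        have : ‖z‖ * Real.sqrt s ≤ ‖z‖ := by
          have h := Real.sqrt_le_one.mpr hs.2
          nlinarith [norm_nonneg z]
        gcongr
      · refine ae_of_all _ fun s => ?_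
        exact (Real.summable_pow_div_factorial ‖z‖).comp_injective
          (i := fun k : ℕ => 2 * k) (fun a b h => by simpa using h)
      · exact integrable_const _
      · exact ae_of_all _ fun s => Complex.hasSum_cosh _
    exact hF.tsum_eq
  rw [hsum, norm_mul, Complex.norm_real, Real.norm_of_nonneg (by positivity)]
  gcongr
  calc ‖∫ s, Complex.cosh (z * (Real.sqrt s : ℂ)) ∂ρ‖
      ≤ Real.exp |z.re| * ρ.real univ := by
        refine norm_integral_le_of_norm_le_const ?_
        filter_upwards [hsupp] with s hs
        have hre : (z * (Real.sqrt s : ℂ)).re = z.re * Real.sqrt s := by simp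
        have hle : |z.re * Real.sqrt s| ≤ |z.re| := by
          rw [abs_mul, abs_of_nonneg (Real.sqrt_nonneg s)]
          have h := Real.sqrt_le_one.mpr hs.2
          nlinarith [abs_nonneg z.re]
        rw [Complex.cosh, norm_div, Complex.norm_ofNat]
        have h1 : ‖Complex.exp (z * (Real.sqrt s : ℂ))‖ ≤ Real.exp |z.re| := by
          rw [Complex.norm_exp, hre]
          exact Real.exp_le_exp.mpr ((le_abs_self _).trans hle)
        have h2 : ‖Complex.exp (-(z * (Real.sqrt s : ℂ)))‖ ≤ Real.exp |z.re| := by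
          rw [Complex.norm_exp, Complex.neg_re, hre]
          exact Real.exp_le_exp.mpr ((neg_le_abs _).trans hle)
        have := norm_add_le (Complex.exp (z * (Real.sqrt s : ℂ)))
          (Complex.exp (-(z * (Real.sqrt s : ℂ))))
        linarith
    _ = _ := by simp

lemma sum_choose_mul_descFactorial_div_Gamma (m : ℕ) : ∀ (n : ℕ) {b : ℝ}, 0 < b →
    ∑ k ∈ Finset.range (m + 1), (m.choose k : ℝ) * (n.descFactorial k / Real.Gamma (b + k)) =
      Real.Gamma (b + m + n) / (Real.Gamma (b + m) * Real.Gamma (b + n)) := by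
  induction m with
  | zero =>
    intro n b hb
    have h0 : 0 < Real.Gamma b := Real.Gamma_pos_of_pos hb
    have h1 := Gamma_add_nat_pos hb n
    simp
    field_simp
  | succ m ih =>
    intro n b hb
    have h := Finset.sum_choose_succ_mul
      (fun k _ => (n.descFactorial k : ℝ) / Real.Gamma (b + k)) m
    rw [h, ih n hb]
    have g0 : 0 < Real.Gamma (b + m) := Gamma_add_nat_pos hb m
    have g1 : 0 < Real.Gamma (b + n) := Gamma_add_nat_pos hb n
    have e1 : Real.Gamma (b + (m + 1 : ℕ)) = (b + m) * Real.Gamma (b + m) := by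
      rw [← Real.Gamma_add_one (by positivity)]
      push_cast
      ring_nf
    have e2 : Real.Gamma (b + (m + 1 : ℕ) + n) = (b + m + n) * Real.Gamma (b + m + n) := by
      rw [← Real.Gamma_add_one (by positivity)]
      push_cast
      ring_nf
    cases n with
    | zero =>
      simp
      push_cast at e1 e2
      rw [e1]
      simp at e2 g1
      field_simp
    | succ n =>
      have h2 := ih n (b := b + 1) (by linarith)
      have e3 : ∀ k : ℕ, (m.choose k : ℝ) *
          (((n + 1).descFactorial (k + 1) : ℝ) / Real.Gamma (b + (k + 1 : ℕ))) =
          (n + 1) * ((m.choose k : ℝ) * (n.descFactorial k / Real.Gamma (b + 1 + k))) := by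
        intro k
        rw [Nat.succ_descFactorial_succ]
        push_cast
        rw [show b + ((k : ℝ) + 1) = b + 1 + k by ring]
        ring
      simp_rw [e3]
      rw [← Finset.mul_sum, h2, e1, e2]
      have e4 : Real.Gamma (b + 1 + m) = (b + m) * Real.Gamma (b + m) := by
        rw [← e1]; push_cast; ring_nf
      have e5 : b + 1 + (m : ℝ) + n = b + m + (n + 1 : ℕ) := by push_cast; ring
      have e6 : b + 1 + (n : ℝ) = b + (n + 1 : ℕ) := by push_cast; ring
      rw [e4, e5, e6]
      have hbm : b + (m : ℝ) ≠ 0 := by positivity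
      generalize Real.Gamma (b + (n + 1 : ℕ)) = G1 at *
      generalize Real.Gamma (b + m) = G2 at *
      generalize Real.Gamma (b + m + (n + 1 : ℕ)) = G3 at *
      push_cast
      field_simp

lemma Gamma_mul_besselCoeff_mul {b : ℝ} (hb : 0 < b) (m n : ℕ) :
    Real.Gamma (b + m + n) * besselCoeff b m * besselCoeff b n =
      ∑ k ∈ Finset.range (m + 1),
        (m.choose k : ℝ) * (n.descFactorial k / Real.Gamma (b + k)) /
          (m.factorial * n.factorial) := by
  rw [← Finset.sum_div, sum_choose_mul_descFactorial_div_Gamma m n hb]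
  unfold besselCoeff
  have h1 := Gamma_add_nat_pos hb n
  have h2 := Gamma_add_nat_pos hb m
  field_simp

/-- The double series behind Weber's second exponential integral. -/
lemma hasSum_Gamma_mul_besselCoeff {b : ℝ} (hb : 1 / 2 ≤ b) (X Y : ℂ) :
    HasSum (fun p : ℕ × ℕ => ((Real.Gamma (b + p.1 + p.2) * besselCoeff b p.1 *
        besselCoeff b p.2 : ℝ) : ℂ) * (X ^ p.1 * Y ^ p.2))
      (Complex.exp (X + Y) * besselE b (X * Y)) := by
  have hb0 : 0 < b := by linarith
  have hexp : ∀ w : ℂ, HasSum (fun k : ℕ => w ^ k / (k.factorial : ℂ)) (Complex.exp w) := by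
    intro w
    rw [Complex.exp_eq_exp_ℂ]
    exact NormedSpace.expSeries_div_hasSum_exp w
  have hexpn : ∀ w : ℂ, Summable fun k : ℕ => ‖w ^ k / (k.factorial : ℂ)‖ :=
    fun w => NormedSpace.norm_expSeries_div_summable w
  have hXYn := (hexpn X).mul_norm (hexpn Y)
  have hXY := (hexp X).mul (hexp Y) hXYn.of_norm
  have hE := (summable_norm_besselTerm hb (X * Y))
  have hG := (hE.of_norm.hasSum).mul hXY (hE.mul_norm hXYn).of_norm
  set G' : ℕ × (ℕ × ℕ) → ℂ := fun q =>
    (((q.2.1.choose q.1 : ℝ) * (q.2.2.descFactorial q.1 / Real.Gamma (b + q.1)) /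
          (q.2.1.factorial * q.2.2.factorial) : ℝ) : ℂ) * (X ^ q.2.1 * Y ^ q.2.2) with hG'
  set e : ℕ × (ℕ × ℕ) → ℕ × (ℕ × ℕ) := fun q => (q.1, (q.2.1 + q.1, q.2.2 + q.1)) with he
  have hinj : Function.Injective e := by
    rintro ⟨k, i, j⟩ ⟨k', i', j'⟩ h
    simp only [he, Prod.mk.injEq] at h
    obtain ⟨rfl, h1, h2⟩ := h
    simp only [Prod.mk.injEq, true_and]
    omega
  have hoff : ∀ q ∉ range e, G' q = 0 := by
    rintro ⟨k, m, n⟩ hq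
    have : m < k ∨ n < k := by
      by_contra hc
      rw [not_or, not_lt, not_lt] at hc
      exact hq ⟨(k, (m - k, n - k)), by simp [he, hc.1, hc.2]⟩
    rcases this with h | h
    · simp [hG', Nat.choose_eq_zero_of_lt h]
    · simp [hG', Nat.descFactorial_of_lt h]
  have hcomp : G' ∘ e = fun q : ℕ × (ℕ × ℕ) => ((besselCoeff b q.1 : ℂ) * (X * Y) ^ q.1) *
      (X ^ q.2.1 / (q.2.1.factorial : ℂ) * (Y ^ q.2.2 / (q.2.2.factorial : ℂ))) := by
    funext ⟨k, i, j⟩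
    have h1 : ((i + k).choose k : ℝ) * (k.factorial * i.factorial) = (i + k).factorial := by
      have := Nat.add_choose_mul_factorial_mul_factorial i k
      exact_mod_cast (by rw [← this]; ring)
    have h2 : (j.factorial : ℝ) * ((j + k).descFactorial k : ℝ) = (j + k).factorial := by
      have := Nat.factorial_mul_descFactorial (Nat.le_add_left k j)
      rw [Nat.add_sub_cancel] at this
      exact_mod_cast this
    have h3 := Gamma_add_nat_pos hb0 k
    have hcoef : ((i + k).choose k : ℝ) * ((j + k).descFactorial k / Real.Gamma (b + k)) /
          ((i + k).factorial * (j + k).factorial) =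
        besselCoeff b k / (i.factorial * j.factorial) := by
      rw [← h1, ← h2]
      have h4 : (0 : ℝ) < (i + k).choose k := by exact_mod_cast Nat.choose_pos (by omega)
      have h5 : (0 : ℝ) < (j + k).descFactorial k := by
        exact_mod_cast Nat.descFactorial_pos.mpr (by omega)
      unfold besselCoeff
      field_simp
    simp only [hG', he, Function.comp_apply]
    rw [hcoef]
    push_cast
    rw [mul_pow, pow_add, pow_add]
    field_simp
  have hsumG' : HasSum G' (besselE b (X * Y) * (Complex.exp X * Complex.exp Y)) := by
    rw [← hinj.hasSum_iff hoff, hcomp]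
    exact hG
  have hsw := (Equiv.prodComm (ℕ × ℕ) ℕ).hasSum_iff.mpr hsumG'
  have hfin := hsw.prod_fiberwise (g := fun p : ℕ × ℕ => ((Real.Gamma (b + p.1 + p.2) *
      besselCoeff b p.1 * besselCoeff b p.2 : ℝ) : ℂ) * (X ^ p.1 * Y ^ p.2)) (by
    rintro ⟨m, n⟩
    rw [Gamma_mul_besselCoeff_mul hb0, Complex.ofReal_sum, Finset.sum_mul]
    refine hasSum_sum_of_ne_finset_zero fun k hk => ?_
    have : m < k := by simpa [Nat.lt_succ_iff] using hk
    simp [hG', Nat.choose_eq_zero_of_lt this])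
  convert! hfin using 1
  rw [Complex.exp_add]
  ring

lemma summable_norm_Gamma_mul_besselCoeff {b : ℝ} (hb : 1 / 2 ≤ b) (X Y : ℝ) :
    Summable fun p : ℕ × ℕ => Real.Gamma (b + p.1 + p.2) * besselCoeff b p.1 *
        besselCoeff b p.2 * (X ^ p.1 * Y ^ p.2) := by
  have h := (hasSum_Gamma_mul_besselCoeff hb (X : ℂ) (Y : ℂ)).summable
  rw [← Complex.summable_ofReal]
  convert h using 2 with p
  push_cast
  ring

/-- The measure `x ^ a dx` on the half-line. -/
noncomputable def powMeasure (a : ℝ) : Measure ℝ :=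
  (volume.restrict (Ioi 0)).withDensity fun x => ENNReal.ofReal (x ^ a)

instance (a : ℝ) : SFinite (powMeasure a) := by
  unfold powMeasure
  infer_instance

lemma ae_powMeasure_pos (a : ℝ) : ∀ᵐ x ∂powMeasure a, 0 < x := by
  refine (withDensity_absolutelyContinuous _ _).ae_le ?_
  exact ae_restrict_mem measurableSet_Ioi

lemma integral_powMeasure {E : Type*} [NormedAddCommGroup E] [NormedSpace ℝ E] (a : ℝ)
    (f : ℝ → E) : ∫ x, f x ∂powMeasure a = ∫ x in Ioi (0 : ℝ), x ^ a • f x := by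
  unfold powMeasure
  rw [integral_withDensity_eq_integral_toReal_smul (by fun_prop)
    (ae_of_all _ fun _ => ENNReal.ofReal_lt_top)]
  refine setIntegral_congr_fun measurableSet_Ioi fun x hx => ?_
  have hx' : (0 : ℝ) < x := hx
  simp only [ENNReal.toReal_ofReal (Real.rpow_nonneg hx'.le a)]

lemma integrable_powMeasure_iff {E : Type*} [NormedAddCommGroup E] [NormedSpace ℝ E] (a : ℝ)
    {f : ℝ → E} :
    Integrable f (powMeasure a) ↔ IntegrableOn (fun x : ℝ => x ^ a • f x) (Ioi 0) := by
  unfold powMeasure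
  rw [integrable_withDensity_iff_integrable_smul' (by fun_prop)
    (ae_of_all _ fun _ => ENNReal.ofReal_lt_top)]
  refine integrableOn_congr_fun (fun x hx => ?_) measurableSet_Ioi
  have hx' : (0 : ℝ) < x := hx
  simp only [ENNReal.toReal_ofReal (Real.rpow_nonneg hx'.le a)]

lemma integrable_exp_neg_mul_sq_powMeasure {s : ℝ} (hs : -1 < s) {p : ℝ} (hp : 0 < p) :
    Integrable (fun ξ : ℝ => Real.exp (-p * ξ ^ 2)) (powMeasure s) := by
  rw [integrable_powMeasure_iff]
  exact integrableOn_rpow_mul_exp_neg_mul_sq hp hs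

lemma integral_exp_neg_mul_sq_powMeasure {s : ℝ} (hs : -1 < s) {p : ℝ} (hp : 0 < p) :
    ∫ ξ, Real.exp (-p * ξ ^ 2) ∂powMeasure s =
      1 / 2 * p ^ (-((s + 1) / 2)) * Real.Gamma ((s + 1) / 2) := by
  have h := integral_rpow_mul_exp_neg_mul_rpow (p := 2) two_pos hs hp
  rw [integral_powMeasure]
  simp only [Real.rpow_two] at h
  simp only [smul_eq_mul]
  rw [h, neg_div]
  ring

lemma integral_cexp_neg_mul_sq_powMeasure {s : ℝ} (hs : -1 < s) {p : ℂ} (hp : 0 < p.re) :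
    ∫ ξ, Complex.exp (-p * (ξ : ℂ) ^ 2) ∂powMeasure s =
      1 / 2 * p ^ (-((s + 1) / 2 : ℝ) : ℂ) * Real.Gamma ((s + 1) / 2) := by
  set U : Set ℂ := {z | 0 < z.re} with hU
  have hUo : IsOpen U := isOpen_lt continuous_const Complex.continuous_re
  have hset : Ioi (0 : ℝ) ⊆ interior
      (ProbabilityTheory.integrableExpSet (fun ξ : ℝ => -ξ ^ 2) (powMeasure s)) := by
    refine interior_maximal (fun t ht => ?_) isOpen_Ioi
    have := integrable_exp_neg_mul_sq_powMeasure hs ht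
    simp only [ProbabilityTheory.integrableExpSet, mem_ofPred_eq]
    convert this using 3
    ring
  have hf : DifferentiableOn ℂ
      (ProbabilityTheory.complexMGF (fun ξ : ℝ => -ξ ^ 2) (powMeasure s)) U :=
    ProbabilityTheory.differentiableOn_complexMGF.mono fun z hz => hset hz
  have hg : DifferentiableOn ℂ
      (fun p : ℂ => 1 / 2 * p ^ (-((s + 1) / 2 : ℝ) : ℂ) * Real.Gamma ((s + 1) / 2)) U := by
    intro z hz
    have hz' : z ∈ Complex.slitPlane := Or.inl hz
    exact (((differentiableAt_id.cpow_const hz').const_mul _).mul_const _).differentiableWithinAt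
  have hpre : IsPreconnected U := (convex_halfSpace_re_gt 0).isPreconnected
  have h1 : (1 : ℂ) ∈ U := by simp [hU]
  have hfreq : ∃ᶠ z in nhdsWithin (1 : ℂ) {1}ᶜ,
      ProbabilityTheory.complexMGF (fun ξ : ℝ => -ξ ^ 2) (powMeasure s) z =
      1 / 2 * z ^ (-((s + 1) / 2 : ℝ) : ℂ) * Real.Gamma ((s + 1) / 2) := by
    have ht : Tendsto (fun x : ℝ => (x : ℂ)) (nhdsWithin 1 (Ioi 1)) (nhdsWithin (1 : ℂ) {1}ᶜ) := by
      refine tendsto_nhdsWithin_iff.mpr ⟨?_, ?_⟩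
      · exact (Complex.continuous_ofReal.tendsto' 1 1 (by simp)).mono_left nhdsWithin_le_nhds
      · filter_upwards [self_mem_nhdsWithin] with x hx
        have : (1 : ℝ) < x := hx
        simpa using this.ne'
    refine ht.frequently (Eventually.frequently ?_)
    filter_upwards [self_mem_nhdsWithin] with x hx
    have hx' : (0 : ℝ) < x := lt_trans one_pos hx
    have h := integral_exp_neg_mul_sq_powMeasure hs hx'
    unfold ProbabilityTheory.complexMGF
    have h2 := congrArg (fun r : ℝ => (r : ℂ)) h
    rw [← integral_complex_ofReal] at h2
    push_cast at h2
    rw [Complex.ofReal_cpow hx'.le] at h2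
    push_cast at h2 ⊢
    rw [← h2]
    congr 1
    funext ξ
    congr 1
    ring
  have := (hf.analyticOnNhd hUo).eqOn_of_preconnected_of_frequently_eq
    (hg.analyticOnNhd hUo) hpre h1 hfreq (show p ∈ U from hp)
  refine Eq.trans ?_ this
  unfold ProbabilityTheory.complexMGF
  congr 1
  funext ξ
  congr 1
  push_cast
  ring

lemma continuous_besselE {b : ℝ} (hb : 1 / 2 ≤ b) : Continuous (besselE b) := by
  rw [continuous_iff_continuousAt]
  intro w
  have h : ContinuousOn (besselE b) (Metric.ball 0 (‖w‖ + 1)) := by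
    refine continuousOn_tsum (u := fun k => besselCoeff b k * (‖w‖ + 1) ^ k)
      (fun k => by fun_prop) (summable_besselCoeff hb (by positivity)) fun k z hz => ?_
    rw [norm_besselTerm (by linarith)]
    have hz' : ‖z‖ ≤ ‖w‖ + 1 := by simpa using (Metric.mem_ball.mp hz).le
    have := (besselCoeff_pos (by linarith : 0 < b) k).le
    gcongr
  exact h.continuousAt (Metric.isOpen_ball.mem_nhds (by simp))

/-- The kernel `E(-z² / 4) = (2 / z) ^ ν J_ν(z)` with `ν = b - 1`. -/
noncomputable def besselKernel (b z : ℝ) : ℝ :=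
  ∑' k : ℕ, besselCoeff b k * (-(z ^ 2 / 4)) ^ k

lemma ofReal_besselKernel (b z : ℝ) :
    (besselKernel b z : ℂ) = besselE b (-((z : ℂ) ^ 2 / 4)) := by
  unfold besselKernel besselE
  push_cast
  rfl

lemma continuous_besselKernel {b : ℝ} (hb : 1 / 2 ≤ b) : Continuous (besselKernel b) := by
  have h : Continuous fun z : ℝ => (besselE b (-((z : ℂ) ^ 2 / 4))).re :=
    Complex.continuous_re.comp ((continuous_besselE hb).comp (by fun_prop))
  convert h using 2 with z
  rw [← ofReal_besselKernel, Complex.ofReal_re]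

lemma norm_besselKernel_le {b : ℝ} (hb : 1 / 2 ≤ b) (z : ℝ) :
    ‖(besselKernel b z : ℂ)‖ ≤ (Real.Gamma b)⁻¹ := by
  have h := norm_besselE_sq_le hb (Complex.I * z)
  rw [mul_pow, Complex.I_sq] at h
  rw [ofReal_besselKernel]
  simpa [neg_div] using h

lemma integrable_cexp_neg_mul_sq_powMeasure {s : ℝ} (hs : -1 < s) {p : ℂ} (hp : 0 < p.re) :
    Integrable (fun ξ : ℝ => Complex.exp (-p * (ξ : ℂ) ^ 2)) (powMeasure s) :=
  (integrable_exp_neg_mul_sq_powMeasure hs hp).mono'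
    (Continuous.aestronglyMeasurable (by fun_prop))
    (ae_of_all _ fun ξ => (norm_cexp_neg_mul_sq p ξ).le)

lemma rpow_add_two_mul_nat_smul {E : Type*} [NormedAddCommGroup E] [NormedSpace ℝ E] (a : ℝ)
    (n : ℕ) {x : ℝ} (hx : 0 < x) (v : E) : x ^ (a + 2 * n) • v = x ^ a • x ^ (2 * n) • v := by
  rw [Real.rpow_add hx, smul_smul]
  congr 2
  exact_mod_cast Real.rpow_natCast x (2 * n)

lemma integrable_pow_smul_powMeasure_iff {E : Type*} [NormedAddCommGroup E] [NormedSpace ℝ E]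
    (a : ℝ) (n : ℕ) {f : ℝ → E} :
    Integrable (fun x : ℝ => x ^ (2 * n) • f x) (powMeasure a) ↔
      Integrable f (powMeasure (a + 2 * n)) := by
  rw [integrable_powMeasure_iff, integrable_powMeasure_iff]
  exact integrableOn_congr_fun (fun x hx => (rpow_add_two_mul_nat_smul a n hx _).symm)
    measurableSet_Ioi

lemma integral_pow_smul_powMeasure {E : Type*} [NormedAddCommGroup E] [NormedSpace ℝ E]
    (a : ℝ) (n : ℕ) (f : ℝ → E) :
    ∫ x, x ^ (2 * n) • f x ∂powMeasure a = ∫ x, f x ∂powMeasure (a + 2 * n) := by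
  rw [integral_powMeasure, integral_powMeasure]
  exact setIntegral_congr_fun measurableSet_Ioi
    (fun x hx => (rpow_add_two_mul_nat_smul a n hx _).symm)

lemma integral_pow_mul_exp_neg_mul_sq {a : ℝ} (ha : 0 ≤ a) (n : ℕ) {p : ℝ} (hp : 0 < p) :
    ∫ ξ, ξ ^ (2 * n) * Real.exp (-p * ξ ^ 2) ∂powMeasure a =
      1 / 2 * p ^ (-((a + 1) / 2)) * (Real.Gamma ((a + 1) / 2 + n) * (1 / p) ^ n) := by
  have h := integral_pow_smul_powMeasure a n fun ξ : ℝ => Real.exp (-p * ξ ^ 2)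
  simp only [smul_eq_mul] at h
  rw [h, integral_exp_neg_mul_sq_powMeasure (by linarith [n.cast_nonneg (α := ℝ)]) hp,
    show (a + 2 * n + 1) / 2 = (a + 1) / 2 + n by ring, neg_add, Real.rpow_add hp,
    Real.rpow_neg hp.le (n : ℝ),
    Real.rpow_natCast, one_div, one_div, inv_pow]
  ring

lemma integral_pow_mul_cexp_neg_mul_sq {a : ℝ} (ha : 0 ≤ a) (n : ℕ) {p : ℂ} (hp : 0 < p.re) :
    ∫ ξ, (ξ : ℂ) ^ (2 * n) * Complex.exp (-p * (ξ : ℂ) ^ 2) ∂powMeasure a =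
      1 / 2 * p ^ (-((a + 1) / 2 : ℝ) : ℂ) * (Real.Gamma ((a + 1) / 2 + n) * (1 / p) ^ n) := by
  have h := integral_pow_smul_powMeasure a n fun ξ : ℝ => Complex.exp (-p * (ξ : ℂ) ^ 2)
  simp only [Complex.real_smul, Complex.ofReal_pow] at h
  have hp0 : p ≠ 0 := by rintro rfl; simp at hp
  rw [h, integral_cexp_neg_mul_sq_powMeasure (by linarith [n.cast_nonneg (α := ℝ)]) hp,
    show (a + 2 * n + 1) / 2 = (a + 1) / 2 + n by ring, Complex.ofReal_add, neg_add,
    Complex.cpow_add _ _ hp0, Complex.ofReal_natCast, Complex.cpow_neg p (n : ℂ),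
    Complex.cpow_natCast, one_div, one_div,
    inv_pow]
  ring

/-- The Weber kernel, in closed form. -/
noncomputable def weberKernel (b : ℝ) (p : ℂ) (x y : ℝ) : ℂ :=
  1 / 2 * p ^ (-b : ℂ) * (Complex.exp (-(x ^ 2 / 4 * (1 / p)) + -(y ^ 2 / 4 * (1 / p))) *
    besselE b (-(x ^ 2 / 4 * (1 / p)) * -(y ^ 2 / 4 * (1 / p))))

/-- Weber's second exponential integral. -/
lemma integral_besselKernel_mul_besselKernel {a : ℝ} (ha : 0 ≤ a) {p : ℂ} (hp : 0 < p.re)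
    (x y : ℝ) :
    ∫ ξ, Complex.exp (-p * (ξ : ℂ) ^ 2) * (besselKernel ((a + 1) / 2) (ξ * y) : ℂ) *
        (besselKernel ((a + 1) / 2) (ξ * x) : ℂ) ∂powMeasure a =
      weberKernel ((a + 1) / 2) p x y := by
  set b := (a + 1) / 2 with hbdef
  have hb : 1 / 2 ≤ b := by rw [hbdef]; linarith
  have hb0 : 0 < b := by linarith
  set F : ℕ × ℕ → ℝ → ℂ := fun q ξ =>
    ((besselCoeff b q.1 * besselCoeff b q.2 : ℝ) *
      ((-(x ^ 2 / 4) : ℂ) ^ q.1 * (-(y ^ 2 / 4) : ℂ) ^ q.2)) *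
        ((ξ : ℂ) ^ (2 * (q.1 + q.2)) * Complex.exp (-p * (ξ : ℂ) ^ 2)) with hF
  have hFint : ∀ q, Integrable (F q) (powMeasure a) := fun q => by
    refine Integrable.const_mul ?_ _
    have h := (integrable_pow_smul_powMeasure_iff a (q.1 + q.2)).mpr
      (integrable_cexp_neg_mul_sq_powMeasure
        (s := a + 2 * (q.1 + q.2 : ℕ))
        (by linarith [(q.1 + q.2).cast_nonneg (α := ℝ)]) hp)
    simpa only [Complex.real_smul, Complex.ofReal_pow] using h
  have hFnorm : Summable fun q => ∫ ξ, ‖F q ξ‖ ∂powMeasure a := by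
    have h := (summable_norm_Gamma_mul_besselCoeff hb (x ^ 2 / 4 * (1 / p.re))
      (y ^ 2 / 4 * (1 / p.re))).mul_left (1 / 2 * p.re ^ (-b))
    refine (summable_congr fun q => ?_).mpr h
    have hn : ∀ ξ : ℝ, ‖F q ξ‖ = (besselCoeff b q.1 * besselCoeff b q.2 *
        ((x ^ 2 / 4) ^ q.1 * (y ^ 2 / 4) ^ q.2)) *
          (ξ ^ (2 * (q.1 + q.2)) * Real.exp (-p.re * ξ ^ 2)) := by
      intro ξ
      have h1 := (besselCoeff_pos hb0 q.1).le
      have h2 := (besselCoeff_pos hb0 q.2).le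
      simp only [hF]
      rw [norm_mul, norm_mul, norm_mul, norm_mul, norm_cexp_neg_mul_sq, norm_pow, norm_pow,
        norm_pow, norm_neg, norm_neg, pow_mul ‖(ξ : ℂ)‖, pow_mul ξ]
      simp [abs_of_nonneg h1, abs_of_nonneg h2]
    simp_rw [hn]
    rw [integral_const_mul, integral_pow_mul_exp_neg_mul_sq ha _ hp]
    push_cast
    rw [← add_assoc, pow_add, mul_pow, mul_pow]
    ring
  have hsum := hasSum_integral_of_summable_integral_norm hFint hFnorm
  have hpt : ∀ ξ : ℝ, ∑' q, F q ξ = Complex.exp (-p * (ξ : ℂ) ^ 2) *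
      (besselKernel b (ξ * y) : ℂ) * (besselKernel b (ξ * x) : ℂ) := by
    intro ξ
    rw [ofReal_besselKernel, ofReal_besselKernel]
    unfold besselE
    rw [mul_assoc, mul_comm (tsum _), tsum_mul_tsum_of_summable_norm
      (summable_norm_besselTerm hb _) (summable_norm_besselTerm hb _), ← tsum_mul_left]
    refine tsum_congr fun q => ?_
    simp only [hF]
    push_cast
    have e : ∀ (z : ℝ) (k : ℕ), (-(((ξ : ℂ) * z) ^ 2 / 4)) ^ k =
        (-((z : ℂ) ^ 2 / 4)) ^ k * (ξ : ℂ) ^ (2 * k) := by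
      intro z k
      rw [pow_mul, ← mul_pow]
      congr 1
      ring
    rw [e, e, mul_add, pow_add]
    ring
  simp_rw [hpt] at hsum
  refine hsum.unique ?_
  have h := (hasSum_Gamma_mul_besselCoeff hb (-(x ^ 2 / 4 * (1 / p)) : ℂ)
    (-(y ^ 2 / 4 * (1 / p)) : ℂ)).mul_left (1 / 2 * p ^ (-b : ℂ))
  unfold weberKernel
  refine h.congr_fun fun q => ?_
  simp only [hF]
  rw [integral_const_mul, integral_pow_mul_cexp_neg_mul_sq ha _ hp]
  rw [neg_mul_eq_neg_mul, neg_mul_eq_neg_mul, mul_pow, mul_pow, pow_add,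
    ← hbdef]
  generalize p ^ (-(b : ℂ)) = w
  push_cast
  rw [← add_assoc]
  ring

lemma norm_weberKernel_le {b : ℝ} (hb : 1 / 2 ≤ b) {p : ℂ} (hp : 0 < p.re) (x y : ℝ) :
    ‖weberKernel b p x y‖ ≤ 1 / 2 * (Real.Gamma b)⁻¹ * ‖p‖ ^ (-b) := by
  have hΓ : 0 < Real.Gamma b := Real.Gamma_pos_of_pos (by linarith)
  have hr : 0 ≤ (1 / p).re := by
    rw [one_div, Complex.inv_re]
    exact div_nonneg hp.le (Complex.normSq_nonneg p)
  have hE := norm_besselE_sq_le hb (((x * y / 2 : ℝ) : ℂ) * (1 / p))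
  rw [Complex.re_ofReal_mul, abs_mul, abs_of_nonneg hr] at hE
  have harg : (((x * y / 2 : ℝ) : ℂ) * (1 / p)) ^ 2 / 4 =
      -((x : ℂ) ^ 2 / 4 * (1 / p)) * -((y : ℂ) ^ 2 / 4 * (1 / p)) := by
    push_cast
    ring
  rw [harg] at hE
  have hexp : ‖Complex.exp (-((x : ℂ) ^ 2 / 4 * (1 / p)) + -((y : ℂ) ^ 2 / 4 * (1 / p)))‖ =
      Real.exp (-((x ^ 2 + y ^ 2) / 4 * (1 / p).re)) := by
    rw [Complex.norm_exp]
    congr 1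
    have : -((x : ℂ) ^ 2 / 4 * (1 / p)) + -((y : ℂ) ^ 2 / 4 * (1 / p)) =
        ((-((x ^ 2 + y ^ 2) / 4) : ℝ) : ℂ) * (1 / p) := by
      push_cast
      ring
    rw [this, Complex.re_ofReal_mul]
    ring
  unfold weberKernel
  rw [norm_mul, norm_mul, norm_mul, hexp, ← Complex.ofReal_neg, Complex.norm_cpow_real]
  calc _ ≤ ‖(1 / 2 : ℂ)‖ * ‖p‖ ^ (-b) * (Real.exp (-((x ^ 2 + y ^ 2) / 4 * (1 / p).re)) *
        ((Real.Gamma b)⁻¹ * Real.exp (|x * y / 2| * (1 / p).re))) := by gcongr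
    _ = ‖(1 / 2 : ℂ)‖ * ‖p‖ ^ (-b) * (Real.Gamma b)⁻¹ *
        Real.exp (-((x ^ 2 + y ^ 2) / 4 * (1 / p).re) + |x * y / 2| * (1 / p).re) := by
      rw [Real.exp_add]
      ring
    _ ≤ ‖(1 / 2 : ℂ)‖ * ‖p‖ ^ (-b) * (Real.Gamma b)⁻¹ * 1 := by
      gcongr
      rw [Real.exp_le_one_iff]
      have h : |x * y / 2| ≤ (x ^ 2 + y ^ 2) / 4 := by
        rw [abs_le]
        constructor <;> nlinarith [sq_nonneg (x - y), sq_nonneg (x + y)]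
      nlinarith
    _ = _ := by
      norm_num
      ring

noncomputable def besselTransform (a : ℝ) (f : ℝ → ℂ) (ξ : ℝ) : ℂ :=
  ∫ x, f x * (besselKernel ((a + 1) / 2) (ξ * x) : ℂ) ∂powMeasure a

section Transform

variable {a : ℝ} {f g : ℝ → ℂ}

lemma continuous_ofReal_besselKernel_mul (ha : 0 ≤ a) (ξ : ℝ) :
    Continuous fun x : ℝ => (besselKernel ((a + 1) / 2) (ξ * x) : ℂ) :=
  Complex.continuous_ofReal.comp ((continuous_besselKernel (by linarith)).comp (by fun_prop))

lemma integrable_mul_besselKernel (ha : 0 ≤ a) (hf : Integrable f (powMeasure a)) (ξ : ℝ) :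
    Integrable (fun x => f x * (besselKernel ((a + 1) / 2) (ξ * x) : ℂ)) (powMeasure a) :=
  hf.mul_bdd (continuous_ofReal_besselKernel_mul ha ξ).aestronglyMeasurable
    (ae_of_all _ fun _ => norm_besselKernel_le (by linarith) _)

lemma norm_besselTransform_le (ha : 0 ≤ a) (hf : Integrable f (powMeasure a)) (ξ : ℝ) :
    ‖besselTransform a f ξ‖ ≤ (∫ x, ‖f x‖ ∂powMeasure a) * (Real.Gamma ((a + 1) / 2))⁻¹ := by
  rw [← integral_mul_const]
  refine norm_integral_le_of_norm_le (hf.norm.mul_const _) (ae_of_all _ fun x => ?_)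
  rw [norm_mul]
  gcongr
  exact norm_besselKernel_le (by linarith) _

lemma continuous_besselTransform (ha : 0 ≤ a) (hf : Integrable f (powMeasure a)) :
    Continuous (besselTransform a f) := by
  refine continuous_of_dominated (bound := fun x => ‖f x‖ * (Real.Gamma ((a + 1) / 2))⁻¹)
    (fun ξ => (integrable_mul_besselKernel ha hf ξ).aestronglyMeasurable)
    (fun ξ => ae_of_all _ fun x => ?_) (hf.norm.mul_const _) (ae_of_all _ fun x => ?_)
  · rw [norm_mul]
    gcongr
    exact norm_besselKernel_le (by linarith) _
  · refine continuous_const.mul (Complex.continuous_ofReal.comp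
      ((continuous_besselKernel (by linarith)).comp (by fun_prop)))

lemma besselTransform_add (ha : 0 ≤ a) (hf : Integrable f (powMeasure a))
    (hg : Integrable g (powMeasure a)) :
    besselTransform a (f + g) = besselTransform a f + besselTransform a g := by
  funext ξ
  simp only [besselTransform, Pi.add_apply, add_mul]
  exact integral_add (integrable_mul_besselKernel ha hf ξ) (integrable_mul_besselKernel ha hg ξ)

lemma conj_besselTransform (a : ℝ) (f : ℝ → ℂ) (ξ : ℝ) :
    (starRingEnd ℂ) (besselTransform a f ξ) =
      besselTransform a (fun x => (starRingEnd ℂ) (f x)) ξ := by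
  unfold besselTransform
  rw [← integral_conj]
  simp

lemma integral_mul_besselTransform (ha : 0 ≤ a) (hf : Integrable f (powMeasure a))
    (hg : Integrable g (powMeasure a)) :
    ∫ ξ, g ξ * besselTransform a f ξ ∂powMeasure a =
      ∫ x, besselTransform a g x * f x ∂powMeasure a := by
  simp only [besselTransform, ← integral_const_mul, ← integral_mul_const]
  rw [integral_integral_swap]
  · refine integral_congr_ae (ae_of_all _ fun x => integral_congr_ae (ae_of_all _ fun y => ?_))
    simp only [mul_comm y x]
    ring
  · have h : Integrable (fun z : ℝ × ℝ => (g z.1 * f z.2) *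
        (besselKernel ((a + 1) / 2) (z.1 * z.2) : ℂ)) ((powMeasure a).prod (powMeasure a)) := by
      refine (hg.mul_prod hf).mul_bdd (Continuous.aestronglyMeasurable ?_)
        (ae_of_all _ fun _ => norm_besselKernel_le (by linarith) _)
      exact Complex.continuous_ofReal.comp
        ((continuous_besselKernel (by linarith)).comp (by fun_prop))
    simpa only [Function.uncurry_def, mul_assoc] using h

/-- The spectral multiplier `exp (-p ξ²)` of the Bessel transform. -/
noncomputable def besselSemigroup (a : ℝ) (p : ℂ) (f : ℝ → ℂ) : ℝ → ℂ :=
  besselTransform a fun ξ => Complex.exp (-p * (ξ : ℂ) ^ 2) * besselTransform a f ξ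

lemma integrable_cexp_mul_besselTransform (ha : 0 ≤ a) {p : ℂ} (hp : 0 < p.re)
    (hf : Integrable f (powMeasure a)) :
    Integrable (fun ξ : ℝ => Complex.exp (-p * (ξ : ℂ) ^ 2) * besselTransform a f ξ)
      (powMeasure a) :=
  (integrable_cexp_neg_mul_sq_powMeasure (by linarith) hp).mul_bdd
    (continuous_besselTransform ha hf).aestronglyMeasurable
    (ae_of_all _ fun ξ => norm_besselTransform_le ha hf ξ)

lemma besselSemigroup_eq (ha : 0 ≤ a) {p : ℂ} (hp : 0 < p.re)
    (hf : Integrable f (powMeasure a)) (y : ℝ) :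
    besselSemigroup a p f y = ∫ x, weberKernel ((a + 1) / 2) p x y * f x ∂powMeasure a := by
  have hg := integrable_mul_besselKernel ha
    (integrable_cexp_neg_mul_sq_powMeasure (s := a) (by linarith) hp) y
  have h := integral_mul_besselTransform ha hf hg
  have e : ∀ x, besselTransform a (fun ξ : ℝ => Complex.exp (-p * (ξ : ℂ) ^ 2) *
      (besselKernel ((a + 1) / 2) (y * ξ) : ℂ)) x = weberKernel ((a + 1) / 2) p x y := by
    intro x
    rw [← integral_besselKernel_mul_besselKernel ha hp x y]
    unfold besselTransform
    simp only [mul_comm y, mul_comm x]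
  simp only [e] at h
  rw [← h]
  unfold besselSemigroup
  rw [besselTransform]
  exact integral_congr_ae (ae_of_all _ fun ξ => by ring)

lemma enorm_besselSemigroup_le (ha : 0 ≤ a) {p : ℂ} (hp : 0 < p.re)
    (hf : Integrable f (powMeasure a)) (y : ℝ) :
    ‖besselSemigroup a p f y‖ₑ ≤
      ENNReal.ofReal (1 / 2 * (Real.Gamma ((a + 1) / 2))⁻¹ * ‖p‖ ^ (-((a + 1) / 2))) *
        ∫⁻ x, ‖f x‖ₑ ∂powMeasure a := by
  rw [besselSemigroup_eq ha hp hf]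
  refine (enorm_integral_le_lintegral_enorm _).trans ?_
  rw [← lintegral_const_mul' _ _ ENNReal.ofReal_ne_top]
  refine lintegral_mono fun x => ?_
  rw [enorm_mul]
  gcongr
  rw [← ofReal_norm]
  exact ENNReal.ofReal_le_ofReal (norm_weberKernel_le (by linarith) hp x y)

lemma integral_cexp_mul_besselTransform_mul_conj (ha : 0 ≤ a) {p : ℂ} (hp : 0 < p.re)
    (hf : Integrable f (powMeasure a)) (hg : Integrable g (powMeasure a)) :
    ∫ ξ, Complex.exp (-p * (ξ : ℂ) ^ 2) * besselTransform a f ξ *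
        (starRingEnd ℂ) (besselTransform a g ξ) ∂powMeasure a =
      ∫ y, besselSemigroup a p f y * (starRingEnd ℂ) (g y) ∂powMeasure a := by
  simp only [conj_besselTransform]
  refine integral_mul_besselTransform ha ?_ (integrable_cexp_mul_besselTransform ha hp hf)
  exact (LinearIsometryEquiv.integrable_comp_iff Complex.conjLIE).mpr hg

lemma besselSemigroup_add (ha : 0 ≤ a) {p : ℂ} (hp : 0 < p.re)
    (hf : Integrable f (powMeasure a)) (hg : Integrable g (powMeasure a)) :
    besselSemigroup a p (f + g) = besselSemigroup a p f + besselSemigroup a p g := by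
  unfold besselSemigroup
  rw [← besselTransform_add ha (integrable_cexp_mul_besselTransform ha hp hf)
    (integrable_cexp_mul_besselTransform ha hp hg), besselTransform_add ha hf hg]
  simp only [Pi.add_def, Pi.add_apply, mul_add]

lemma continuous_besselSemigroup (ha : 0 ≤ a) {p : ℂ} (hp : 0 < p.re)
    (hf : Integrable f (powMeasure a)) : Continuous (besselSemigroup a p f) :=
  continuous_besselTransform ha (integrable_cexp_mul_besselTransform ha hp hf)

lemma weberKernel_comm (b : ℝ) (p : ℂ) (x y : ℝ) : weberKernel b p x y = weberKernel b p y x := by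
  unfold weberKernel
  rw [add_comm, mul_comm (-((x : ℂ) ^ 2 / 4 * (1 / p)))]

lemma continuous_weberKernel {b : ℝ} (hb : 1 / 2 ≤ b) (p : ℂ) :
    Continuous fun z : ℝ × ℝ => weberKernel b p z.1 z.2 := by
  unfold weberKernel
  refine continuous_const.mul (Continuous.mul (by fun_prop) ?_)
  exact (continuous_besselE hb).comp (by fun_prop)

lemma enorm_weberKernel_ofReal_le {b : ℝ} (hb : 1 / 2 ≤ b) {ε : ℝ} (hε : 0 < ε) (x y : ℝ) :
    ‖weberKernel b ε x y‖ₑ ≤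
      ∑' k : ℕ, ENNReal.ofReal (1 / 2 * ε ^ (-b) * Real.exp (-(x ^ 2 / (4 * ε))) *
        (besselCoeff b k * (x ^ 2 / (16 * ε ^ 2)) ^ k)) *
          ENNReal.ofReal (y ^ (2 * k) * Real.exp (-(1 / (4 * ε)) * y ^ 2)) := by
  have hb0 : 0 < b := by linarith
  set A : ℝ := 1 / 2 * ε ^ (-b) * Real.exp (-(x ^ 2 / (4 * ε))) *
    Real.exp (-(1 / (4 * ε)) * y ^ 2) with hA
  have hA0 : 0 ≤ A := by positivity
  have hs := summable_besselCoeff hb (x := x ^ 2 / (16 * ε ^ 2) * y ^ 2) (by positivity)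
  have hK : weberKernel b ε x y =
      ((A * ∑' k, besselCoeff b k * (x ^ 2 / (16 * ε ^ 2) * y ^ 2) ^ k : ℝ) : ℂ) := by
    unfold weberKernel besselE
    rw [hA]
    push_cast
    rw [Complex.ofReal_cpow hε.le]
    push_cast
    have hε' : (ε : ℂ) ≠ 0 := by exact_mod_cast hε.ne'
    have e1 : -((x : ℂ) ^ 2 / 4 * (1 / ε)) + -((y : ℂ) ^ 2 / 4 * (1 / ε)) =
        -(x ^ 2 / (4 * ε)) + -(1 / (4 * ε)) * y ^ 2 := by
      field_simp
    have e2 : -((x : ℂ) ^ 2 / 4 * (1 / ε)) * -((y : ℂ) ^ 2 / 4 * (1 / ε)) =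
        x ^ 2 / (16 * ε ^ 2) * y ^ 2 := by
      field_simp
      norm_num
      ring
    rw [e1, e2, Complex.exp_add]
    ring
  rw [hK, ← ofReal_norm, Complex.norm_real, Real.norm_of_nonneg
    (mul_nonneg hA0 (tsum_nonneg fun k =>
    mul_nonneg (besselCoeff_pos hb0 k).le (by positivity))), ← tsum_mul_left,
    ENNReal.ofReal_tsum_of_nonneg (fun k => mul_nonneg hA0
      (mul_nonneg (besselCoeff_pos hb0 k).le (by positivity))) (hs.mul_left A)]
  refine ENNReal.tsum_le_tsum fun k => ?_
  have := (besselCoeff_pos hb0 k).le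
  rw [← ENNReal.ofReal_mul (by positivity)]
  refine ENNReal.ofReal_le_ofReal (le_of_eq ?_)
  rw [hA, mul_pow, pow_mul]
  ring

lemma lintegral_enorm_weberKernel_ofReal_le (ha : 0 ≤ a) {ε : ℝ} (hε : 0 < ε) (x : ℝ) :
    ∫⁻ y, ‖weberKernel ((a + 1) / 2) ε x y‖ₑ ∂powMeasure a ≤
      ENNReal.ofReal (4 ^ ((a + 1) / 2)) := by
  set b := (a + 1) / 2 with hbdef
  have hb : 1 / 2 ≤ b := by rw [hbdef]; linarith
  have hb0 : 0 < b := by linarith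
  refine (lintegral_mono fun y => enorm_weberKernel_ofReal_le hb hε x y).trans ?_
  rw [lintegral_tsum fun k => by fun_prop]
  have hint : ∀ k : ℕ, ∫⁻ y, ENNReal.ofReal (y ^ (2 * k) * Real.exp (-(1 / (4 * ε)) * y ^ 2))
      ∂powMeasure a = ENNReal.ofReal
        (1 / 2 * (1 / (4 * ε)) ^ (-b) * (Real.Gamma (b + k) * (4 * ε) ^ k)) := by
    intro k
    rw [← ofReal_integral_eq_lintegral_ofReal, integral_pow_mul_exp_neg_mul_sq ha k (by positivity),
      one_div_one_div]
    · have h := (integrable_pow_smul_powMeasure_iff a k).mpr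
        (integrable_exp_neg_mul_sq_powMeasure (s := a + 2 * k) (p := 1 / (4 * ε))
          (by linarith [k.cast_nonneg (α := ℝ)]) (by positivity))
      simpa only [smul_eq_mul] using h
    · refine ae_of_all _ fun y => ?_
      have : 0 ≤ y ^ (2 * k) := by rw [pow_mul]; positivity
      exact mul_nonneg this (Real.exp_pos _).le
  set X := x ^ 2 / (4 * ε) with hX
  have hX0 : 0 ≤ X := by positivity
  have hterm : ∀ k : ℕ, ∫⁻ y, ENNReal.ofReal (1 / 2 * ε ^ (-b) * Real.exp (-X) *
        (besselCoeff b k * (x ^ 2 / (16 * ε ^ 2)) ^ k)) *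
          ENNReal.ofReal (y ^ (2 * k) * Real.exp (-(1 / (4 * ε)) * y ^ 2)) ∂powMeasure a =
      ENNReal.ofReal (1 / 4 * 4 ^ b * Real.exp (-X) * (X ^ k / k.factorial)) := by
    intro k
    have hc := (besselCoeff_pos hb0 k).le
    rw [lintegral_const_mul _ (by fun_prop), hint, ← ENNReal.ofReal_mul (by positivity)]
    congr 1
    have h1 : (1 / (4 * ε)) ^ (-b) = 4 ^ b * ε ^ b := by
      rw [one_div, Real.inv_rpow (by positivity), ← Real.rpow_neg (by positivity), neg_neg,
        Real.mul_rpow (by norm_num) hε.le]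
    have h2 : ε ^ (-b) * ε ^ b = 1 := by rw [← Real.rpow_add hε, neg_add_cancel, Real.rpow_zero]
    have h3 : besselCoeff b k * Real.Gamma (b + k) = 1 / k.factorial := by
      unfold besselCoeff
      have := (Gamma_add_nat_pos hb0 k).ne'
      field_simp
    have h4 : (x ^ 2 / (16 * ε ^ 2)) ^ k * (4 * ε) ^ k = X ^ k := by
      rw [← mul_pow, hX]
      congr 1
      field_simp
      norm_num
    rw [h1]
    calc _ = 1 / 4 * 4 ^ b * Real.exp (-X) * (ε ^ (-b) * ε ^ b) *
          ((besselCoeff b k * Real.Gamma (b + k)) *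
            ((x ^ 2 / (16 * ε ^ 2)) ^ k * (4 * ε) ^ k)) := by ring
      _ = _ := by rw [h2, h3, h4]; ring
  simp only [hterm]
  rw [← ENNReal.ofReal_tsum_of_nonneg (fun k => by positivity)
    ((Real.summable_pow_div_factorial X).mul_left _), tsum_mul_left]
  refine ENNReal.ofReal_le_ofReal ?_
  have hexp : ∑' k : ℕ, X ^ k / (k.factorial : ℝ) = Real.exp X := by
    rw [Real.exp_eq_exp_ℝ, NormedSpace.exp_eq_tsum_div]
  rw [hexp, mul_assoc, ← Real.exp_add, neg_add_cancel, Real.exp_zero]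
  have : (0 : ℝ) < 4 ^ b := by positivity
  linarith

end Transform

section Energy

variable {a : ℝ} {f g : ℝ → ℂ}

lemma lintegral_enorm_sq_mul_exp (ha : 0 ≤ a) (hg : Measurable g) {D : ℝ} (hD : ∀ ξ, ‖g ξ‖ ≤ D)
    {ε : ℝ} (hε : 0 < ε) :
    ∫⁻ ξ, ENNReal.ofReal (Real.exp (-ε * ξ ^ 2)) * ‖g ξ‖ₑ ^ 2 ∂powMeasure a =
      ‖∫ ξ, Complex.exp (-(ε : ℂ) * (ξ : ℂ) ^ 2) * g ξ * (starRingEnd ℂ) (g ξ)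
        ∂powMeasure a‖ₑ := by
  have e : ∀ ξ : ℝ, Complex.exp (-(ε : ℂ) * (ξ : ℂ) ^ 2) * g ξ * (starRingEnd ℂ) (g ξ) =
      ((Real.exp (-ε * ξ ^ 2) * ‖g ξ‖ ^ 2 : ℝ) : ℂ) := by
    intro ξ
    rw [mul_assoc, Complex.mul_conj, Complex.normSq_eq_norm_sq]
    push_cast
    rfl
  have hint : Integrable (fun ξ : ℝ => Real.exp (-ε * ξ ^ 2) * ‖g ξ‖ ^ 2) (powMeasure a) := by
    refine (integrable_exp_neg_mul_sq_powMeasure (by linarith) hε).mul_bdd (c := D ^ 2)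
      (by fun_prop) (ae_of_all _ fun ξ => ?_)
    rw [norm_pow, norm_norm]
    gcongr
    exact hD ξ
  simp only [e]
  rw [integral_complex_ofReal, ← ofReal_norm, Complex.norm_real, Real.norm_of_nonneg
    (integral_nonneg fun ξ => by positivity), ofReal_integral_eq_lintegral_ofReal hint
    (ae_of_all _ fun ξ => by positivity)]
  refine lintegral_congr fun ξ => ?_
  rw [ENNReal.ofReal_mul (Real.exp_pos _).le, ENNReal.ofReal_pow (norm_nonneg _), ofReal_norm]

lemma lintegral_enorm_sq_le_of_forall (ha : 0 ≤ a) (hg : Measurable g) {D : ℝ}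
    (hD : ∀ ξ, ‖g ξ‖ ≤ D) {B : ENNReal}
    (hB : ∀ ε : ℝ, 0 < ε → ‖∫ ξ, Complex.exp (-(ε : ℂ) * (ξ : ℂ) ^ 2) * g ξ *
      (starRingEnd ℂ) (g ξ) ∂powMeasure a‖ₑ ≤ B) :
    ∫⁻ ξ, ‖g ξ‖ₑ ^ 2 ∂powMeasure a ≤ B := by
  have hlim : ∀ ξ : ℝ, Tendsto (fun n : ℕ =>
      ENNReal.ofReal (Real.exp (-(1 / ((n : ℝ) + 1)) * ξ ^ 2)) * ‖g ξ‖ₑ ^ 2) atTop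
      (nhds (‖g ξ‖ₑ ^ 2)) := by
    intro ξ
    have h1 : Tendsto (fun n : ℕ => Real.exp (-(1 / ((n : ℝ) + 1)) * ξ ^ 2)) atTop (nhds 1) := by
      have h := ((tendsto_one_div_add_atTop_nhds_zero_nat (𝕜 := ℝ)).neg.mul_const (ξ ^ 2)).rexp
      simpa using h
    have h2 := ENNReal.Tendsto.mul_const (b := ‖g ξ‖ₑ ^ 2) (ENNReal.tendsto_ofReal h1)
      (Or.inr (by finiteness))
    simpa using h2
  calc ∫⁻ ξ, ‖g ξ‖ₑ ^ 2 ∂powMeasure a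
      = ∫⁻ ξ, liminf (fun n : ℕ =>
        ENNReal.ofReal (Real.exp (-(1 / ((n : ℝ) + 1)) * ξ ^ 2)) * ‖g ξ‖ₑ ^ 2) atTop
          ∂powMeasure a := lintegral_congr fun ξ => (hlim ξ).liminf_eq.symm
    _ ≤ liminf (fun n : ℕ => ∫⁻ ξ, ENNReal.ofReal (Real.exp (-(1 / ((n : ℝ) + 1)) * ξ ^ 2)) *
        ‖g ξ‖ₑ ^ 2 ∂powMeasure a) atTop := lintegral_liminf_le fun n => by fun_prop
    _ ≤ B := by
      refine liminf_le_of_le (by isBoundedDefault) fun c hc => ?_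
      obtain ⟨n, hn⟩ := hc.exists
      refine hn.trans ?_
      have hpos : (0 : ℝ) < 1 / ((n : ℝ) + 1) := by positivity
      rw [lintegral_enorm_sq_mul_exp ha hg hD hpos]
      exact hB _ hpos

lemma lintegral_enorm_besselTransform_sq_le (ha : 0 ≤ a) (hf : Integrable f (powMeasure a)) :
    ∫⁻ ξ, ‖besselTransform a f ξ‖ₑ ^ 2 ∂powMeasure a ≤
      2 * ENNReal.ofReal (4 ^ ((a + 1) / 2)) * ∫⁻ x, ‖f x‖ₑ ^ 2 ∂powMeasure a := by
  have hb : 1 / 2 ≤ (a + 1) / 2 := by linarith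
  refine lintegral_enorm_sq_le_of_forall ha (continuous_besselTransform ha hf).measurable
    (norm_besselTransform_le ha hf) fun ε hε => ?_
  have hp : 0 < (ε : ℂ).re := by simpa using hε
  rw [integral_cexp_mul_besselTransform_mul_conj ha hp hf hf]
  set K : ℝ → ℝ → ENNReal := fun x y => ‖weberKernel ((a + 1) / 2) ε x y‖ₑ with hK
  have hKm : Measurable (Function.uncurry K) :=
    (continuous_weberKernel hb (ε : ℂ)).measurable.enorm
  have hfm : AEMeasurable (fun x => ‖f x‖ₑ ^ 2) (powMeasure a) :=
    (hf.aestronglyMeasurable.enorm).pow_const 2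
  have hm : AEMeasurable (Function.uncurry fun x y => K x y * ‖f x‖ₑ ^ 2)
      ((powMeasure a).prod (powMeasure a)) :=
    hKm.aemeasurable.mul hfm.comp_fst
  calc ‖∫ y, besselSemigroup a ε f y * (starRingEnd ℂ) (f y) ∂powMeasure a‖ₑ
      ≤ ∫⁻ y, ∫⁻ x, (K x y * ‖f x‖ₑ ^ 2 + K x y * ‖f y‖ₑ ^ 2) ∂powMeasure a ∂powMeasure a := by
        refine (enorm_integral_le_lintegral_enorm _).trans (lintegral_mono fun y => ?_)
        rw [enorm_mul, besselSemigroup_eq ha hp hf, RCLike.enorm_conj]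
        refine (mul_le_mul_left (enorm_integral_le_lintegral_enorm _) _).trans ?_
        rw [← lintegral_mul_const' _ _ enorm_ne_top]
        refine lintegral_mono fun x => ?_
        rw [enorm_mul, ← mul_add, mul_assoc]
        gcongr
        rcases le_total ‖f x‖ₑ ‖f y‖ₑ with h | h
        · calc ‖f x‖ₑ * ‖f y‖ₑ ≤ ‖f y‖ₑ * ‖f y‖ₑ := by gcongr
            _ ≤ _ := by rw [sq ‖f y‖ₑ]; exact le_add_self
        · calc ‖f x‖ₑ * ‖f y‖ₑ ≤ ‖f x‖ₑ * ‖f x‖ₑ := by gcongr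
            _ ≤ _ := by rw [sq ‖f x‖ₑ]; exact le_self_add
    _ = (∫⁻ y, ∫⁻ x, K x y * ‖f x‖ₑ ^ 2 ∂powMeasure a ∂powMeasure a) +
        ∫⁻ y, ∫⁻ x, K x y * ‖f y‖ₑ ^ 2 ∂powMeasure a ∂powMeasure a := by
        have hm' : AEMeasurable (fun y => ∫⁻ x, K x y * ‖f x‖ₑ ^ 2 ∂powMeasure a)
            (powMeasure a) := hm.prod_swap.lintegral_prod_right'
        rw [← lintegral_add_left' hm']
        refine lintegral_congr fun y => lintegral_add_left' ?_ _
        exact (hKm.of_uncurry_right).aemeasurable.mul hfm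
    _ ≤ ENNReal.ofReal (4 ^ ((a + 1) / 2)) * ∫⁻ x, ‖f x‖ₑ ^ 2 ∂powMeasure a +
        ENNReal.ofReal (4 ^ ((a + 1) / 2)) * ∫⁻ x, ‖f x‖ₑ ^ 2 ∂powMeasure a := by
        have hfin : ∀ x, ‖f x‖ₑ ^ 2 ≠ ⊤ := fun x => by finiteness
        gcongr
        · rw [← lintegral_lintegral_swap hm, ← lintegral_const_mul' _ _ ENNReal.ofReal_ne_top]
          refine lintegral_mono fun x => ?_
          rw [lintegral_mul_const' _ _ (hfin x)]
          gcongr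
          exact lintegral_enorm_weberKernel_ofReal_le ha hε x
        · rw [← lintegral_const_mul' _ _ ENNReal.ofReal_ne_top]
          refine lintegral_mono fun y => ?_
          rw [lintegral_mul_const' _ _ (hfin y)]
          gcongr
          simp only [hK, weberKernel_comm _ _ _ y]
          exact lintegral_enorm_weberKernel_ofReal_le ha hε y
    _ = _ := by ring

lemma lintegral_enorm_besselSemigroup_sq_le (ha : 0 ≤ a) {p : ℂ} (hp : 0 < p.re)
    (hf : Integrable f (powMeasure a)) :
    ∫⁻ ξ, ‖besselSemigroup a p f ξ‖ₑ ^ 2 ∂powMeasure a ≤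
      (2 * ENNReal.ofReal (4 ^ ((a + 1) / 2))) ^ 2 * ∫⁻ x, ‖f x‖ₑ ^ 2 ∂powMeasure a := by
  refine (lintegral_enorm_besselTransform_sq_le ha
    (integrable_cexp_mul_besselTransform ha hp hf)).trans ?_
  rw [sq (2 * _), mul_assoc (2 * _) (2 * _)]
  refine mul_le_mul_right ((lintegral_mono fun ξ => ?_).trans
    (lintegral_enorm_besselTransform_sq_le ha hf)) _
  gcongr
  rw [enorm_mul]
  refine mul_le_of_le_one_left' ?_
  rw [← ofReal_norm, norm_cexp_neg_mul_sq, ENNReal.ofReal_le_one, Real.exp_le_one_iff]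
  nlinarith [sq_nonneg ξ]

end Energy

lemma lintegral_Ioc_ofReal_rpow {s L : ℝ} (hs : -1 < s) (hL : 0 ≤ L) :
    ∫⁻ x in Ioc 0 L, ENNReal.ofReal (x ^ s) = ENNReal.ofReal (L ^ (s + 1) / (s + 1)) := by
  have hi : IntegrableOn (fun x : ℝ => x ^ s) (Ioc 0 L) :=
    (intervalIntegrable_iff_integrableOn_Ioc_of_le hL).mp
      (intervalIntegral.intervalIntegrable_rpow' hs)
  rw [← ofReal_integral_eq_lintegral_ofReal hi, ← intervalIntegral.integral_of_le hL,
    integral_rpow (Or.inl hs), Real.zero_rpow (by linarith), sub_zero]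
  filter_upwards [ae_restrict_mem measurableSet_Ioc] with x hx
  exact Real.rpow_nonneg hx.1.le s

section Marcinkiewicz

variable {α : Type*} [MeasurableSpace α] {μ : Measure α} {T : (α → ℂ) → α → ℂ}

lemma measure_lt_norm_le {A : ENNReal} {g : α → ℂ} (hg : AEMeasurable (T g) μ)
    (h2 : ∫⁻ x, ‖T g x‖ₑ ^ 2 ∂μ ≤ A * ∫⁻ x, ‖g x‖ₑ ^ 2 ∂μ) {l : ℝ} (hl : 0 < l) :
    μ {x | l < ‖T g x‖} ≤ A * (∫⁻ x, ‖g x‖ₑ ^ 2 ∂μ) / ENNReal.ofReal l ^ 2 := by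
  have h := meas_ge_le_lintegral_div (μ := μ) (f := fun x => ‖T g x‖ₑ ^ 2)
    (hg.enorm.pow_const 2) (ε := ENNReal.ofReal l ^ 2)
    (by simpa using hl) (by finiteness)
  refine (measure_mono fun x hx => ?_).trans (h.trans ?_)
  · simp only [mem_ofPred_eq] at hx ⊢
    gcongr
    rw [← ofReal_norm]
    exact ENNReal.ofReal_le_ofReal hx.le
  · gcongr

/-- Interpolation between an `L¹ → L^∞` and an `L² → L²` bound. -/
lemma lintegral_enorm_rpow_le_of_interpolation [SFinite μ] {A : ENNReal} {M : ℝ} (hM : 0 < M)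
    (hadd : ∀ f g, Integrable f μ → Integrable g μ → T (f + g) = T f + T g)
    (hmeas : ∀ f, Integrable f μ → AEMeasurable (T f) μ)
    (h1 : ∀ f, Integrable f μ → ∀ x, ‖T f x‖ₑ ≤ ENNReal.ofReal M * ∫⁻ x, ‖f x‖ₑ ∂μ)
    (h2 : ∀ f, Integrable f μ → ∫⁻ x, ‖T f x‖ₑ ^ 2 ∂μ ≤ A * ∫⁻ x, ‖f x‖ₑ ^ 2 ∂μ)
    {r : ℝ} (hr : 2 < r) {f : α → ℂ} (hfm : Measurable f) (hf : Integrable f μ)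
    (hN : ∫⁻ x, ‖f x‖ₑ ^ (r / (r - 1)) ∂μ ≠ ⊤) :
    ∫⁻ x, ‖T f x‖ₑ ^ r ∂μ ≤ ENNReal.ofReal (2 ^ r * r / (r - 2)) * A *
      (ENNReal.ofReal M ^ (r - 2) * (∫⁻ x, ‖f x‖ₑ ^ (r / (r - 1)) ∂μ) ^ (r - 1)) := by
  set s := r / (r - 1) with hs
  have hr1 : 0 < r - 1 := by linarith
  have hs1 : s - 1 = 1 / (r - 1) := by rw [hs]; field_simp; ring
  have hs0 : 0 < s := by rw [hs]; positivity
  have hs1' : 0 < s - 1 := by rw [hs1]; positivity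
  set N := ∫⁻ x, ‖f x‖ₑ ^ s ∂μ with hNdef
  by_cases hN0 : N = 0
  · have hf0 : ∀ᵐ x ∂μ, ‖f x‖ₑ = 0 := by
      rw [hNdef, lintegral_eq_zero_iff (by fun_prop)] at hN0
      filter_upwards [hN0] with x hx
      simpa [ENNReal.rpow_eq_zero_iff, hs0, hs0.not_gt] using hx
    have hT : ∀ x, ‖T f x‖ₑ = 0 := fun x => by
      have h := h1 f hf x
      rw [lintegral_congr_ae hf0, lintegral_zero, mul_zero] at h
      exact le_zero_iff.mp h
    simp only [hT, ENNReal.zero_rpow_of_pos (show 0 < r by linarith), lintegral_zero]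
    exact zero_le
  set n := N.toReal with hn
  have hn0 : 0 < n := ENNReal.toReal_pos hN0 hN
  have hNn : N = ENNReal.ofReal n := (ENNReal.ofReal_toReal hN).symm
  set S : ℝ → Set α := fun l => {x | l * ‖f x‖ ^ (s - 1) ≤ M * n} with hS
  have hSm : ∀ l, MeasurableSet (S l) := fun l => measurableSet_le (by fun_prop) (by fun_prop)
  have hsmall : ∀ l, 0 < l → ∀ x, ‖T ((S l)ᶜ.indicator f) x‖ ≤ l := by
    intro l hl x
    have hh := h1 _ (hf.indicator (hSm l).compl) x
    rw [← ENNReal.ofReal_le_ofReal_iff hl.le, ofReal_norm]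
    refine hh.trans ?_
    have hpt : ∀ x, ENNReal.ofReal M * ‖(S l)ᶜ.indicator f x‖ₑ ≤
        ENNReal.ofReal (l / n) * ‖f x‖ₑ ^ s := by
      intro x
      by_cases hx : x ∈ S l
      · rw [indicator_of_notMem (by simpa using hx)]
        simp
      · rw [indicator_of_mem (by simpa using hx)]
        have hx' : M * n < l * ‖f x‖ ^ (s - 1) := not_le.mp hx
        have hfx : 0 < ‖f x‖ := by
          rcases (norm_nonneg (f x)).eq_or_lt with h | h
          · rw [← h, Real.zero_rpow hs1'.ne', mul_zero] at hx'
            exact absurd hx' (not_lt.mpr (by positivity))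
          · exact h
        rw [← ofReal_norm, ENNReal.ofReal_rpow_of_pos hfx, ← ENNReal.ofReal_mul hM.le,
          ← ENNReal.ofReal_mul (by positivity)]
        refine ENNReal.ofReal_le_ofReal ?_
        have e : ‖f x‖ ^ s = ‖f x‖ ^ (s - 1) * ‖f x‖ := by
          rw [← Real.rpow_add_one hfx.ne', sub_add_cancel]
        rw [e, div_mul_eq_mul_div, le_div_iff₀ hn0]
        nlinarith
    rw [← lintegral_const_mul' _ _ ENNReal.ofReal_ne_top]
    refine (lintegral_mono hpt).trans ?_
    rw [lintegral_const_mul' _ _ ENNReal.ofReal_ne_top, ← hNdef, hNn,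
      ← ENNReal.ofReal_mul (by positivity), div_mul_cancel₀ _ hn0.ne']
  have hlevel : ∀ l, 0 < l → μ {x | l < ‖T f x‖ / 2} * ENNReal.ofReal (l ^ (r - 1)) ≤
      ∫⁻ x, A * ((S l).indicator (fun x => ‖f x‖ₑ ^ 2) x * ENNReal.ofReal (l ^ (r - 3))) ∂μ := by
    intro l hl
    have hsub : {x | l < ‖T f x‖ / 2} ⊆ {x | l < ‖T ((S l).indicator f) x‖} := by
      intro x hx
      simp only [mem_ofPred_eq] at hx ⊢
      have hsplit : T f = T ((S l).indicator f) + T ((S l)ᶜ.indicator f) := by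
        rw [← hadd _ _ (hf.indicator (hSm l)) (hf.indicator (hSm l).compl),
          indicator_self_add_compl]
      have h3 : ‖T f x‖ ≤ ‖T ((S l).indicator f) x‖ + ‖T ((S l)ᶜ.indicator f) x‖ := by
        rw [hsplit]
        exact norm_add_le _ _
      linarith [hsmall l hl x]
    have hm := measure_lt_norm_le (hmeas _ (hf.indicator (hSm l)))
      (h2 _ (hf.indicator (hSm l))) hl
    have he : ∀ x, ‖(S l).indicator f x‖ₑ ^ 2 = (S l).indicator (fun x => ‖f x‖ₑ ^ 2) x := by
      intro x
      by_cases hx : x ∈ S l <;> simp [hx]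
    simp only [he] at hm
    have hl2 : ENNReal.ofReal (l ^ (r - 1)) =
        ENNReal.ofReal l ^ 2 * ENNReal.ofReal (l ^ (r - 3)) := by
      rw [← ENNReal.ofReal_pow hl.le, ← ENNReal.ofReal_mul (by positivity), ← Real.rpow_natCast,
        ← Real.rpow_add hl]
      congr 2
      push_cast
      ring
    calc _ ≤ (A * (∫⁻ x, (S l).indicator (fun x => ‖f x‖ₑ ^ 2) x ∂μ) / ENNReal.ofReal l ^ 2) *
          (ENNReal.ofReal l ^ 2 * ENNReal.ofReal (l ^ (r - 3))) := by
          rw [hl2]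
          gcongr
          exact (measure_mono hsub).trans hm
      _ = A * ((∫⁻ x, (S l).indicator (fun x => ‖f x‖ₑ ^ 2) x ∂μ) *
          ENNReal.ofReal (l ^ (r - 3))) := by
          rw [← mul_assoc, ENNReal.div_mul_cancel (by simpa using hl) (by finiteness), mul_assoc]
      _ = _ := by
          rw [← lintegral_mul_const _ (by measurability), ← lintegral_const_mul]
          exact ((Measurable.indicator (by fun_prop) (hSm l))).mul_const _
  have hinner : ∀ x, ∫⁻ l in Ioi (0 : ℝ),
      (S l).indicator (fun x => ‖f x‖ₑ ^ 2) x * ENNReal.ofReal (l ^ (r - 3)) ≤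
        ENNReal.ofReal ((M * n) ^ (r - 2) / (r - 2)) * ‖f x‖ₑ ^ s := by
    intro x
    rcases (norm_nonneg (f x)).eq_or_lt with h0 | hfx
    · have : f x = 0 := norm_eq_zero.mp h0.symm
      have hz : ∀ l, (S l).indicator (fun x => ‖f x‖ₑ ^ 2) x = 0 := by
        intro l
        rw [indicator_apply]
        simp [this]
      simp [hz]
    set L := M * n / ‖f x‖ ^ (s - 1) with hL
    have hL0 : 0 < L := by positivity
    have hmem : ∀ l, (S l).indicator (fun x => ‖f x‖ₑ ^ 2) x * ENNReal.ofReal (l ^ (r - 3)) =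
        (Iic L).indicator (fun l => ‖f x‖ₑ ^ 2 * ENNReal.ofReal (l ^ (r - 3))) l := by
      intro l
      have : x ∈ S l ↔ l ∈ Iic L := by
        simp only [hS, mem_ofPred_eq, mem_Iic, hL]
        rw [le_div_iff₀ (by positivity)]
      by_cases hx : x ∈ S l
      · rw [indicator_of_mem hx, indicator_of_mem (this.mp hx)]
      · rw [indicator_of_notMem hx, indicator_of_notMem (fun h => hx (this.mpr h)), zero_mul]
    simp only [hmem]
    rw [lintegral_indicator measurableSet_Iic, Measure.restrict_restrict measurableSet_Iic,
      Iic_inter_Ioi, lintegral_const_mul' _ _ (by finiteness),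
      lintegral_Ioc_ofReal_rpow (by linarith) hL0.le, ← ofReal_norm,
      ENNReal.ofReal_rpow_of_pos hfx, ← ENNReal.ofReal_pow hfx.le,
      ← ENNReal.ofReal_mul (by positivity),
      ← ENNReal.ofReal_mul (div_nonneg (by positivity) (by linarith))]
    refine ENNReal.ofReal_le_ofReal (le_of_eq ?_)
    have e1 : r - 3 + 1 = r - 2 := by ring
    have e2 : ‖f x‖ ^ 2 = ‖f x‖ ^ s * (‖f x‖ ^ (s - 1)) ^ (r - 2) := by
      rw [← Real.rpow_mul hfx.le, ← Real.rpow_add hfx, ← Real.rpow_natCast]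
      congr 1
      rw [hs1, hs]
      field_simp
      push_cast
      ring
    rw [e1, hL, Real.div_rpow (by positivity) (by positivity), e2]
    have : (‖f x‖ ^ (s - 1)) ^ (r - 2) ≠ 0 := by positivity
    field_simp
  have hnorm : ∀ x, ‖T f x‖ₑ ^ r = ENNReal.ofReal (2 ^ r) * ENNReal.ofReal ((‖T f x‖ / 2) ^ r) := by
    intro x
    rw [← ENNReal.ofReal_mul (by positivity), ← Real.mul_rpow (by norm_num) (by positivity),
      ← ofReal_norm, ENNReal.ofReal_rpow_of_nonneg (norm_nonneg _) (by linarith)]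
    congr 2
    ring
  have hjoint : Measurable fun z : ℝ × α => (S z.1).indicator (fun x => ‖f x‖ₑ ^ 2) z.2 *
      ENNReal.ofReal (z.1 ^ (r - 3)) := by
    have hm : MeasurableSet {z : ℝ × α | z.1 * ‖f z.2‖ ^ (s - 1) ≤ M * n} :=
      measurableSet_le (by fun_prop) (by fun_prop)
    have hi : Measurable fun z : ℝ × α => (S z.1).indicator (fun x => ‖f x‖ₑ ^ 2) z.2 :=
      Measurable.indicator (f := fun z : ℝ × α => ‖f z.2‖ₑ ^ 2) (by fun_prop) hm
    exact hi.mul (by fun_prop)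
  have hmain : ∫⁻ x, ENNReal.ofReal ((‖T f x‖ / 2) ^ r) ∂μ ≤
      ENNReal.ofReal r * (A * (ENNReal.ofReal ((M * n) ^ (r - 2) / (r - 2)) * N)) := by
    rw [lintegral_rpow_eq_lintegral_meas_lt_mul μ (ae_of_all _ fun x => by positivity)
      ((hmeas f hf).norm.div_const 2) (by linarith)]
    gcongr
    calc _ ≤ ∫⁻ l in Ioi (0 : ℝ), ∫⁻ x, A * ((S l).indicator (fun x => ‖f x‖ₑ ^ 2) x *
          ENNReal.ofReal (l ^ (r - 3))) ∂μ := by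
          refine lintegral_mono_ae ?_
          filter_upwards [ae_restrict_mem measurableSet_Ioi] with l hl
          exact hlevel l hl
      _ = ∫⁻ x, (∫⁻ l in Ioi (0 : ℝ), A * ((S l).indicator (fun x => ‖f x‖ₑ ^ 2) x *
          ENNReal.ofReal (l ^ (r - 3)))) ∂μ := by
          exact lintegral_lintegral_swap (hjoint.const_mul A).aemeasurable
      _ ≤ ∫⁻ x, A * (ENNReal.ofReal ((M * n) ^ (r - 2) / (r - 2)) * ‖f x‖ₑ ^ s) ∂μ := by
          refine lintegral_mono fun x => ?_
          rw [lintegral_const_mul]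
          · gcongr
            exact hinner x
          · exact hjoint.comp (measurable_id.prodMk measurable_const)
      _ = _ := by
          rw [lintegral_const_mul _ (by fun_prop), lintegral_const_mul _ (by fun_prop)]
  simp only [hnorm]
  rw [lintegral_const_mul' _ _ ENNReal.ofReal_ne_top]
  refine (mul_le_mul_right hmain _).trans (le_of_eq ?_)
  rw [hNn, ENNReal.ofReal_rpow_of_pos hM, ENNReal.ofReal_rpow_of_pos hn0]
  have e : ENNReal.ofReal (2 ^ r) * (ENNReal.ofReal r * (A * (ENNReal.ofReal
      ((M * n) ^ (r - 2) / (r - 2)) * ENNReal.ofReal n))) = A * (ENNReal.ofReal (2 ^ r) *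
        ENNReal.ofReal r * ENNReal.ofReal ((M * n) ^ (r - 2) / (r - 2)) * ENNReal.ofReal n) := by
    ring
  have e' : ENNReal.ofReal (2 ^ r * r / (r - 2)) * A * (ENNReal.ofReal (M ^ (r - 2)) *
      ENNReal.ofReal (n ^ (r - 1))) = A * (ENNReal.ofReal (2 ^ r * r / (r - 2)) *
        ENNReal.ofReal (M ^ (r - 2)) * ENNReal.ofReal (n ^ (r - 1))) := by
    ring
  have hr2 : 0 < r - 2 := by linarith
  rw [e, e', ← ENNReal.ofReal_mul (by positivity), ← ENNReal.ofReal_mul (by positivity),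
    ← ENNReal.ofReal_mul (by positivity), ← ENNReal.ofReal_mul (by positivity),
    ← ENNReal.ofReal_mul (by positivity), Real.mul_rpow hM.le hn0.le,
    show r - 1 = r - 2 + 1 by ring, Real.rpow_add_one hn0.ne']
  congr 2
  ring

end Marcinkiewicz

lemma lintegral_comp_abs (g : ℝ → ENNReal) :
    ∫⁻ u : ℝ, g |u| = 2 * ∫⁻ u in Ioi (0 : ℝ), g u := by
  have h1 : ∫⁻ u in Ioi (0 : ℝ), g |u| = ∫⁻ u in Ioi (0 : ℝ), g u :=
    setLIntegral_congr_fun measurableSet_Ioi fun u hu => by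
      rw [abs_of_pos (show 0 < u from hu)]
  have h2 : ∫⁻ u in Iio (0 : ℝ), g |u| = ∫⁻ u in Ioi (0 : ℝ), g u := by
    rw [← h1]
    have h := (Measure.measurePreserving_neg (volume : Measure ℝ)).setLIntegral_comp_preimage_emb
      (Homeomorph.neg ℝ).measurableEmbedding (fun u => g |u|) (Ioi 0)
    simpa using h
  rw [← lintegral_add_compl _ (measurableSet_Ioi (a := (0 : ℝ))), compl_Ioi,
    setLIntegral_congr Iio_ae_eq_Iic.symm, h1, h2, two_mul]

lemma lintegral_Ioi_ofReal_rpow {s L : ℝ} (hs : s < -1) (hL : 0 < L) :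
    ∫⁻ x in Ioi L, ENNReal.ofReal (x ^ s) = ENNReal.ofReal (-L ^ (s + 1) / (s + 1)) := by
  rw [← ofReal_integral_eq_lintegral_ofReal (integrableOn_Ioi_rpow_of_lt hs hL),
    integral_Ioi_rpow_of_lt hs hL]
  filter_upwards [ae_restrict_mem measurableSet_Ioi] with x hx
  exact Real.rpow_nonneg (hL.trans hx).le s

section HardyLittlewoodSobolev

variable {q : ℝ} {h : ℝ → ℝ}

lemma lintegral_near_rpow_abs_sub (hq : 2 < q) {R : ℝ} (hR : 0 < R) (t : ℝ) :
    ∫⁻ s, (Iic R).indicator (fun u => ENNReal.ofReal (u ^ (-(2 / q)))) |t - s| =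
      ENNReal.ofReal (2 * (R ^ (1 - 2 / q) / (1 - 2 / q))) := by
  have h2q : 2 / q < 1 := by rw [div_lt_one (by linarith)]; exact hq
  rw [lintegral_sub_left_eq_self (fun u : ℝ =>
    (Iic R).indicator (fun u => ENNReal.ofReal (u ^ (-(2 / q)))) |u|) t, lintegral_comp_abs,
    lintegral_indicator measurableSet_Iic, Measure.restrict_restrict measurableSet_Iic,
    Iic_inter_Ioi, lintegral_Ioc_ofReal_rpow (by linarith) hR.le,
    ENNReal.ofReal_mul (by norm_num), ENNReal.ofReal_ofNat]
  congr 3 <;> ring_nf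

lemma lintegral_far_rpow_abs_sub (hq : 2 < q) {R : ℝ} (hR : 0 < R) (t : ℝ) :
    ∫⁻ s, ((Ioi R).indicator (fun u => ENNReal.ofReal (u ^ (-(2 / q)))) |t - s|) ^ q =
      ENNReal.ofReal (2 / R) := by
  have hq0 : 0 < q := by linarith
  have e : ∀ u : ℝ, ((Ioi R).indicator (fun u => ENNReal.ofReal (u ^ (-(2 / q)))) u) ^ q =
      (Ioi R).indicator (fun u => ENNReal.ofReal (u ^ (-2 : ℝ))) u := by
    intro u
    by_cases hu : u ∈ Ioi R
    · have hu0 : 0 < u := hR.trans hu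
      rw [indicator_of_mem hu, indicator_of_mem hu,
        ENNReal.ofReal_rpow_of_nonneg (by positivity) hq0.le, ← Real.rpow_mul hu0.le]
      congr 2
      field_simp
    · rw [indicator_of_notMem hu, indicator_of_notMem hu, ENNReal.zero_rpow_of_pos hq0]
  simp only [e]
  rw [lintegral_sub_left_eq_self (fun u : ℝ =>
    (Ioi R).indicator (fun u => ENNReal.ofReal (u ^ (-2 : ℝ))) |u|) t, lintegral_comp_abs,
    lintegral_indicator measurableSet_Ioi, Measure.restrict_restrict measurableSet_Ioi,
    Ioi_inter_Ioi, max_eq_left hR.le, lintegral_Ioi_ofReal_rpow (by norm_num) hR,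
    show (2 : ENNReal) = ENNReal.ofReal 2 by simp, ← ENNReal.ofReal_mul (by norm_num)]
  congr 1
  rw [show (-2 : ℝ) + 1 = -1 by norm_num, Real.rpow_neg_one]
  ring

lemma lintegral_mul_rpow_abs_sub_le (hq : 2 < q) (hm : Measurable h)
    {n : ℝ} (hn : 0 < n)
    (hN : ∫⁻ s, ENNReal.ofReal (h s) ^ (q / (q - 1)) = ENNReal.ofReal n)
    {t : ℝ} (ht : 0 < h t) :
    ∫⁻ s, {s | h s ≤ h t}.indicator
        (fun s => ENNReal.ofReal (h s) * ENNReal.ofReal (|t - s| ^ (-(2 / q)))) s ≤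
      ENNReal.ofReal ((2 / (1 - 2 / q) + 2 ^ (1 / q)) * n ^ (1 - 2 / q) *
        h t ^ (q / (q - 1) - 1)) := by
  have hq0 : 0 < q := by linarith
  have hq1 : 0 < q - 1 := by linarith
  have h2q : 2 / q < 1 := by rw [div_lt_one hq0]; exact hq
  have h2q' : 0 < 1 - 2 / q := by linarith
  set p := q / (q - 1) with hp
  have hp0 : 0 < p := by positivity
  have hpq : p.HolderConjugate q := by
    rw [hp]
    exact (Real.HolderConjugate.conjExponent (by linarith : 1 < q)).symm
  set R := n / h t ^ p with hR
  have hR0 : 0 < R := by positivity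
  set k : ℝ → ENNReal := fun u => ENNReal.ofReal (u ^ (-(2 / q))) with hk
  have hkm : Measurable k := by fun_prop
  calc _ ≤ ∫⁻ s, (ENNReal.ofReal (h t) * (Iic R).indicator k |t - s| +
        ENNReal.ofReal (h s) * (Ioi R).indicator k |t - s|) := by
        refine lintegral_mono fun s => ?_
        by_cases hs : s ∈ {s | h s ≤ h t}
        · have hs' : h s ≤ h t := hs
          rw [indicator_of_mem hs]
          by_cases hR' : |t - s| ≤ R
          · rw [indicator_of_mem (show |t - s| ∈ Iic R from hR')]
            refine le_add_right ?_
            gcongr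
          · rw [indicator_of_mem (show |t - s| ∈ Ioi R from not_le.mp hR')]
            exact le_add_self
        · rw [indicator_of_notMem hs]
          exact zero_le
    _ = ENNReal.ofReal (h t) * (∫⁻ s, (Iic R).indicator k |t - s|) +
        ∫⁻ s, ENNReal.ofReal (h s) * (Ioi R).indicator k |t - s| := by
        have hm1 : Measurable fun s : ℝ => (Iic R).indicator k |t - s| :=
          (hkm.indicator measurableSet_Iic).comp (by fun_prop)
        rw [lintegral_add_left (hm1.const_mul _), lintegral_const_mul _ hm1]
    _ ≤ ENNReal.ofReal (h t) * ENNReal.ofReal (2 * (R ^ (1 - 2 / q) / (1 - 2 / q))) +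
        ENNReal.ofReal n ^ (1 / p) * ENNReal.ofReal (2 / R) ^ (1 / q) := by
        rw [lintegral_near_rpow_abs_sub hq hR0, ← hN, ← lintegral_far_rpow_abs_sub hq hR0 t]
        gcongr
        have hm2 : Measurable fun s : ℝ => (Ioi R).indicator k |t - s| :=
          (hkm.indicator measurableSet_Ioi).comp (by fun_prop)
        exact ENNReal.lintegral_mul_le_Lp_mul_Lq volume hpq (by fun_prop) hm2.aemeasurable
    _ = ENNReal.ofReal (h t * (2 * (R ^ (1 - 2 / q) / (1 - 2 / q))) +
        n ^ (1 / p) * (2 / R) ^ (1 / q)) := by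
        rw [ENNReal.ofReal_rpow_of_pos hn, ENNReal.ofReal_rpow_of_pos (by positivity),
          ← ENNReal.ofReal_mul (by positivity), ← ENNReal.ofReal_mul (by positivity),
          ← ENNReal.ofReal_add (by positivity) (by positivity)]
    _ = _ := by
        congr 1
        have e1 : h t * R ^ (1 - 2 / q) = n ^ (1 - 2 / q) * h t ^ (p - 1) := by
          rw [hR, Real.div_rpow hn.le (by positivity), ← Real.rpow_mul ht.le,
            mul_div_assoc', mul_comm (h t), mul_div_assoc]
          congr 1
          nth_rewrite 1 [← Real.rpow_one (h t)]
          rw [← Real.rpow_sub ht]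
          congr 1
          rw [hp]
          field_simp
          ring
        have e2 : n ^ (1 / p) * (2 / R) ^ (1 / q) =
            2 ^ (1 / q) * (n ^ (1 - 2 / q) * h t ^ (p - 1)) := by
          rw [hR, Real.div_rpow (by norm_num) (by positivity), Real.div_rpow hn.le (by positivity),
            ← Real.rpow_mul ht.le]
          have e3 : n ^ (1 / p) = n ^ (1 - 2 / q) * n ^ (1 / q) := by
            rw [← Real.rpow_add hn]
            congr 1
            rw [hp]
            field_simp
            ring
          have e4 : p * (1 / q) = p - 1 := by
            rw [hp]
            field_simp
            ring
          rw [e3, e4]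
          have : n ^ (1 / q) ≠ 0 := by positivity
          field_simp
        rw [e2]
        linear_combination (2 / (1 - 2 / q)) * e1

/-- The diagonal case of the Hardy–Littlewood–Sobolev inequality on the line. -/
lemma lintegral_lintegral_rpow_abs_sub_le (hq : 2 < q) (hm : Measurable h) (h0 : ∀ t, 0 ≤ h t)
    (hN : ∫⁻ s, ENNReal.ofReal (h s) ^ (q / (q - 1)) ≠ ⊤) :
    ∫⁻ t, ∫⁻ s, ENNReal.ofReal (h t) *
        (ENNReal.ofReal (h s) * ENNReal.ofReal (|t - s| ^ (-(2 / q)))) ≤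
      ENNReal.ofReal (2 * (2 / (1 - 2 / q) + 2 ^ (1 / q))) *
        (∫⁻ s, ENNReal.ofReal (h s) ^ (q / (q - 1))) ^ (2 / (q / (q - 1))) := by
  have hq0 : 0 < q := by linarith
  have hq1 : 0 < q - 1 := by linarith
  have h2q : 2 / q < 1 := by rw [div_lt_one hq0]; exact hq
  have h2q' : 0 < 1 - 2 / q := by linarith
  have hp0 : 0 < q / (q - 1) := by positivity
  set N := ∫⁻ s, ENNReal.ofReal (h s) ^ (q / (q - 1)) with hNdef
  by_cases hN0 : N = 0
  · have hz : ∀ᵐ t, ENNReal.ofReal (h t) = 0 := by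
      rw [hNdef, lintegral_eq_zero_iff (by fun_prop)] at hN0
      filter_upwards [hN0] with x hx
      simpa [ENNReal.rpow_eq_zero_iff, hp0, hp0.not_gt] using hx
    refine le_of_eq_of_le ?_ zero_le
    rw [lintegral_congr_ae (g := fun _ => 0)]
    · simp
    · filter_upwards [hz] with t ht
      simp [ht]
  have hn0 : 0 < N.toReal := ENNReal.toReal_pos hN0 hN
  have hNn : N = ENNReal.ofReal N.toReal := (ENNReal.ofReal_toReal hN).symm
  set n := N.toReal with hn
  set C := 2 / (1 - 2 / q) + (2 : ℝ) ^ (1 / q) with hC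
  have hC0 : 0 ≤ C := by positivity
  set Φ : ℝ → ℝ → ENNReal := fun t s => ENNReal.ofReal (h t) * {s | h s ≤ h t}.indicator
        (fun s => ENNReal.ofReal (h s) * ENNReal.ofReal (|t - s| ^ (-(2 / q)))) s with hΦ
  have hΦm : Measurable (Function.uncurry Φ) := by
    have hset : MeasurableSet {z : ℝ × ℝ | h z.2 ≤ h z.1} :=
      measurableSet_le (by fun_prop) (by fun_prop)
    have hi : Measurable fun z : ℝ × ℝ => {s | h s ≤ h z.1}.indicator
        (fun s => ENNReal.ofReal (h s) * ENNReal.ofReal (|z.1 - s| ^ (-(2 / q)))) z.2 :=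
      Measurable.indicator (f := fun z : ℝ × ℝ => ENNReal.ofReal (h z.2) *
        ENNReal.ofReal (|z.1 - z.2| ^ (-(2 / q)))) (by fun_prop) hset
    have hh : Measurable fun z : ℝ × ℝ => ENNReal.ofReal (h z.1) := by fun_prop
    exact hh.mul hi
  have hone : ∫⁻ t, ∫⁻ s, Φ t s ≤ ENNReal.ofReal C * N ^ (2 / (q / (q - 1))) := by
    calc _ ≤ ∫⁻ t, ENNReal.ofReal (C * n ^ (1 - 2 / q)) *
          ENNReal.ofReal (h t) ^ (q / (q - 1)) := by
          refine lintegral_mono fun t => ?_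
          rcases (h0 t).eq_or_lt with ht | ht
          · simp [hΦ, ← ht]
          · simp only [hΦ]
            rw [lintegral_const_mul' _ _ ENNReal.ofReal_ne_top]
            refine (mul_le_mul_right
              (lintegral_mul_rpow_abs_sub_le hq hm hn0 hNn ht) _).trans ?_
            rw [ENNReal.ofReal_rpow_of_pos ht, ← ENNReal.ofReal_mul ht.le,
              ← ENNReal.ofReal_mul (by positivity)]
            refine ENNReal.ofReal_le_ofReal (le_of_eq ?_)
            have : h t ^ (q / (q - 1)) = h t ^ (q / (q - 1) - 1) * h t := by
              rw [← Real.rpow_add_one ht.ne', sub_add_cancel]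
            rw [this]
            ring
      _ = ENNReal.ofReal (C * n ^ (1 - 2 / q)) * N :=
          lintegral_const_mul' _ _ ENNReal.ofReal_ne_top
      _ = _ := by
          rw [hNn, ENNReal.ofReal_rpow_of_pos hn0, ← ENNReal.ofReal_mul (by positivity),
            ← ENNReal.ofReal_mul hC0, mul_assoc, ← Real.rpow_add_one hn0.ne']
          congr 3
          field_simp
          ring
  calc _ ≤ ∫⁻ t, ∫⁻ s, (Φ t s + Φ s t) := by
        refine lintegral_mono fun t => lintegral_mono fun s => ?_
        rcases le_total (h s) (h t) with hle | hle
        · refine le_add_right (le_of_eq ?_)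
          simp only [hΦ]
          rw [indicator_of_mem (by exact hle)]
        · refine le_add_left (le_of_eq ?_)
          simp only [hΦ]
          rw [indicator_of_mem (by exact hle), abs_sub_comm]
          ring
    _ = (∫⁻ t, ∫⁻ s, Φ t s) + ∫⁻ t, ∫⁻ s, Φ s t := by
        have hm' : Measurable fun t => ∫⁻ s, Φ t s := hΦm.lintegral_prod_right'
        rw [← lintegral_add_left hm']
        exact lintegral_congr fun t =>
          lintegral_add_left (hΦm.comp (measurable_const.prodMk measurable_id)) _
    _ = (∫⁻ t, ∫⁻ s, Φ t s) + ∫⁻ t, ∫⁻ s, Φ t s := by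
        rw [lintegral_lintegral_swap (f := fun t s => Φ s t)]
        exact (hΦm.comp measurable_swap).aemeasurable
    _ ≤ _ := by
        rw [ENNReal.ofReal_mul (by norm_num), ENNReal.ofReal_ofNat, mul_assoc, two_mul]
        gcongr

end HardyLittlewoodSobolev

lemma exists_enorm_integral_cexp_mul_besselTransform_le {a r : ℝ} (ha : 0 ≤ a) (hr : 2 < r) :
    ∃ D : ENNReal, D ≠ ⊤ ∧ ∀ (p : ℂ) (f g : ℝ → ℂ), 0 < p.re → Measurable f → Measurable g →
      Integrable f (powMeasure a) → Integrable g (powMeasure a) →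
      ∫⁻ x, ‖f x‖ₑ ^ (r / (r - 1)) ∂powMeasure a ≠ ⊤ →
      ‖∫ ξ, Complex.exp (-p * (ξ : ℂ) ^ 2) * besselTransform a f ξ *
        (starRingEnd ℂ) (besselTransform a g ξ) ∂powMeasure a‖ₑ ≤
      D * (ENNReal.ofReal (‖p‖ ^ (-((a + 1) * (1 / 2 - 1 / r)))) *
        ((∫⁻ x, ‖f x‖ₑ ^ (r / (r - 1)) ∂powMeasure a) ^ (1 / (r / (r - 1))) *
          (∫⁻ x, ‖g x‖ₑ ^ (r / (r - 1)) ∂powMeasure a) ^ (1 / (r / (r - 1))))) := by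
  have hr0 : 0 < r := by linarith
  have hr1 : 0 < r - 1 := by linarith
  set c : ℝ := 1 / 2 * (Real.Gamma ((a + 1) / 2))⁻¹ with hc
  have hc0 : 0 < c := by
    have : 0 < Real.Gamma ((a + 1) / 2) := Real.Gamma_pos_of_pos (by linarith)
    positivity
  set A : ENNReal := (2 * ENNReal.ofReal (4 ^ ((a + 1) / 2))) ^ 2 with hA
  set K : ENNReal := ENNReal.ofReal (2 ^ r * r / (r - 2)) with hK
  have hA' : A ≠ ⊤ := by rw [hA]; finiteness
  have hK' : K ≠ ⊤ := by rw [hK]; finiteness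
  refine ⟨(K * A) ^ (1 / r) * ENNReal.ofReal (c ^ ((r - 2) * (1 / r))),
    ENNReal.mul_ne_top (ENNReal.rpow_ne_top_of_nonneg (by positivity)
      (ENNReal.mul_ne_top hK' hA')) ENNReal.ofReal_ne_top, ?_⟩
  intro p f g hp hfm hgm hf hg hN
  have hp0 : 0 < ‖p‖ := norm_pos_iff.mpr (by rintro rfl; simp at hp)
  set M := c * ‖p‖ ^ (-((a + 1) / 2)) with hM
  have hM0 : 0 < M := by positivity
  set N := ∫⁻ x, ‖f x‖ₑ ^ (r / (r - 1)) ∂powMeasure a with hNdef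
  have key := lintegral_enorm_rpow_le_of_interpolation (μ := powMeasure a)
    (T := besselSemigroup a p) (A := A) hM0
    (fun f g hf hg => besselSemigroup_add ha hp hf hg)
    (fun f hf => (continuous_besselSemigroup ha hp hf).measurable.aemeasurable)
    (fun f hf x => enorm_besselSemigroup_le ha hp hf x)
    (fun f hf => lintegral_enorm_besselSemigroup_sq_le ha hp hf) hr hfm hf hN
  have hconj : r.HolderConjugate (r / (r - 1)) :=
    Real.HolderConjugate.conjExponent (by linarith)
  rw [integral_cexp_mul_besselTransform_mul_conj ha hp hf hg]
  refine (enorm_integral_le_lintegral_enorm _).trans ?_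
  simp only [enorm_mul, RCLike.enorm_conj]
  have hholder := ENNReal.lintegral_mul_le_Lp_mul_Lq (powMeasure a) hconj
    (f := fun y => ‖besselSemigroup a p f y‖ₑ) (g := fun y => ‖g y‖ₑ)
    (continuous_besselSemigroup ha hp hf).measurable.enorm.aemeasurable (by fun_prop)
  refine hholder.trans ?_
  rw [← mul_assoc, ← mul_assoc]
  gcongr
  refine (ENNReal.rpow_le_rpow key (by positivity)).trans (le_of_eq ?_)
  rw [← hNdef, ← hK, ENNReal.mul_rpow_of_nonneg (K * A) _ (by positivity),
    ENNReal.mul_rpow_of_nonneg (ENNReal.ofReal M ^ (r - 2)) _ (by positivity),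
    ← ENNReal.rpow_mul, ← ENNReal.rpow_mul,
    ENNReal.ofReal_rpow_of_pos hM0, hM, Real.mul_rpow hc0.le (by positivity),
    ← Real.rpow_mul hp0.le, ENNReal.ofReal_mul (by positivity)]
  have e1 : (r - 1) * (1 / r) = 1 / (r / (r - 1)) := by field_simp
  have e2 : -((a + 1) / 2) * ((r - 2) * (1 / r)) = -((a + 1) * (1 / 2 - 1 / r)) := by
    field_simp
  rw [e1, e2]
  ring

/-- The Fourier–Bessel transform restricted to the half-parabola. -/
noncomputable def parabolaTransform (a : ℝ) (u : ℝ → ℝ → ℂ) (ξ : ℝ) : ℂ :=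
  ∫ t : ℝ, Complex.exp ((ξ ^ 2 * t : ℝ) * Complex.I) * besselTransform a (fun x => u x t) ξ

section Decay

variable {a : ℝ} {u : ℝ → ℝ → ℂ} {W V : ℝ → ℝ} {C : ℝ}

lemma integrable_slice (hum : Measurable fun z : ℝ × ℝ => u z.1 z.2)
    (hW : Integrable W (powMeasure a)) (hu : ∀ x t, ‖u x t‖ ≤ C * (W x * V t)) (t : ℝ) :
    Integrable (fun x => u x t) (powMeasure a) :=
  ((hW.mul_const (V t)).const_mul C).mono'
    (hum.comp (measurable_id.prodMk measurable_const)).aestronglyMeasurable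
    (ae_of_all _ fun x => hu x t)

lemma norm_besselTransform_slice_le (ha : 0 ≤ a)
    (hum : Measurable fun z : ℝ × ℝ => u z.1 z.2)
    (hW : Integrable W (powMeasure a)) (hu : ∀ x t, ‖u x t‖ ≤ C * (W x * V t)) (ξ t : ℝ) :
    ‖besselTransform a (fun x => u x t) ξ‖ ≤
      C * (∫ x, W x ∂powMeasure a) * (Real.Gamma ((a + 1) / 2))⁻¹ * V t := by
  have hΓ : 0 < Real.Gamma ((a + 1) / 2) := Real.Gamma_pos_of_pos (by linarith)
  refine (norm_besselTransform_le ha (integrable_slice hum hW hu t) ξ).trans ?_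
  have h : ∫ x, ‖u x t‖ ∂powMeasure a ≤ ∫ x, C * (W x * V t) ∂powMeasure a :=
    integral_mono (integrable_slice hum hW hu t).norm ((hW.mul_const (V t)).const_mul C)
      fun x => hu x t
  rw [integral_const_mul, integral_mul_const] at h
  calc _ ≤ (C * ((∫ x, W x ∂powMeasure a) * V t)) * (Real.Gamma ((a + 1) / 2))⁻¹ := by gcongr
    _ = _ := by ring

lemma stronglyMeasurable_besselTransform_slice (ha : 0 ≤ a)
    (hum : Measurable fun z : ℝ × ℝ => u z.1 z.2) :
    StronglyMeasurable fun z : ℝ × ℝ => besselTransform a (fun x => u x z.2) z.1 := by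
  have hj : Measurable fun y : (ℝ × ℝ) × ℝ => (besselKernel ((a + 1) / 2) (y.1.1 * y.2) : ℂ) :=
    (Complex.continuous_ofReal.comp
      ((continuous_besselKernel (by linarith)).comp (by fun_prop))).measurable
  have hm : Measurable fun y : (ℝ × ℝ) × ℝ =>
      u y.2 y.1.2 * (besselKernel ((a + 1) / 2) (y.1.1 * y.2) : ℂ) :=
    (hum.comp (measurable_snd.prodMk (measurable_snd.comp measurable_fst))).mul hj
  exact hm.stronglyMeasurable.integral_prod_right'

lemma stronglyMeasurable_parabolaTransform (ha : 0 ≤ a)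
    (hum : Measurable fun z : ℝ × ℝ => u z.1 z.2) :
    StronglyMeasurable (parabolaTransform a u) := by
  have hm : StronglyMeasurable fun z : ℝ × ℝ =>
      Complex.exp ((z.1 ^ 2 * z.2 : ℝ) * Complex.I) * besselTransform a (fun x => u x z.2) z.1 :=
    (Continuous.stronglyMeasurable (by fun_prop)).mul
      (stronglyMeasurable_besselTransform_slice ha hum)
  exact hm.integral_prod_right'

lemma norm_parabolaTransform_le (ha : 0 ≤ a) (hum : Measurable fun z : ℝ × ℝ => u z.1 z.2)
    (hW : Integrable W (powMeasure a)) (hV : Integrable V)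
    (hu : ∀ x t, ‖u x t‖ ≤ C * (W x * V t)) (ξ : ℝ) :
    ‖parabolaTransform a u ξ‖ ≤
      C * (∫ x, W x ∂powMeasure a) * (Real.Gamma ((a + 1) / 2))⁻¹ * ∫ t, V t := by
  rw [← integral_const_mul]
  refine norm_integral_le_of_norm_le (hV.const_mul _) (ae_of_all _ fun t => ?_)
  rw [norm_mul, Complex.norm_exp_ofReal_mul_I, one_mul]
  exact norm_besselTransform_slice_le ha hum hW hu ξ t

lemma integral_exp_mul_parabolaTransform_mul_conj (ha : 0 ≤ a)
    (hum : Measurable fun z : ℝ × ℝ => u z.1 z.2)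
    (hW : Integrable W (powMeasure a)) (hV : Integrable V)
    (hu : ∀ x t, ‖u x t‖ ≤ C * (W x * V t)) {ε : ℝ} (hε : 0 < ε) :
    ∫ ξ, Complex.exp (-(ε : ℂ) * (ξ : ℂ) ^ 2) * parabolaTransform a u ξ *
        (starRingEnd ℂ) (parabolaTransform a u ξ) ∂powMeasure a =
      ∫ z : ℝ × ℝ, ∫ ξ, Complex.exp (-((ε : ℂ) - (z.1 - z.2 : ℝ) * Complex.I) * (ξ : ℂ) ^ 2) *
        besselTransform a (fun x => u x z.1) ξ *
          (starRingEnd ℂ) (besselTransform a (fun x => u x z.2) ξ) ∂powMeasure a := by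
  set D := C * (∫ x, W x ∂powMeasure a) * (Real.Gamma ((a + 1) / 2))⁻¹ with hD
  have hH := stronglyMeasurable_besselTransform_slice ha hum
  have hHb := norm_besselTransform_slice_le ha hum hW hu
  rw [← hD] at hHb
  have hint : Integrable (Function.uncurry fun (ξ : ℝ) (z : ℝ × ℝ) =>
      Complex.exp (-((ε : ℂ) - (z.1 - z.2 : ℝ) * Complex.I) * (ξ : ℂ) ^ 2) *
        besselTransform a (fun x => u x z.1) ξ *
          (starRingEnd ℂ) (besselTransform a (fun x => u x z.2) ξ))
      ((powMeasure a).prod ((volume : Measure ℝ).prod volume)) := by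
    have hdom := (integrable_exp_neg_mul_sq_powMeasure (s := a) (by linarith) hε).mul_prod
      ((hV.const_mul D).mul_prod (hV.const_mul D))
    refine hdom.mono' (StronglyMeasurable.aestronglyMeasurable ?_) (ae_of_all _ fun y => ?_)
    · refine StronglyMeasurable.mul (StronglyMeasurable.mul
        (Continuous.stronglyMeasurable (by fun_prop)) ?_) ?_
      · exact hH.comp_measurable
          (measurable_fst.prodMk (measurable_fst.comp measurable_snd))
      · exact Complex.continuous_conj.comp_stronglyMeasurable (hH.comp_measurable
          (measurable_fst.prodMk (measurable_snd.comp measurable_snd)))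
    · simp only [Function.uncurry_def]
      rw [norm_mul, norm_mul, norm_cexp_neg_mul_sq, RCLike.norm_conj, mul_assoc]
      have e : ((ε : ℂ) - (y.2.1 - y.2.2 : ℝ) * Complex.I).re = ε := by simp
      rw [e]
      gcongr
      · exact (norm_nonneg _).trans (hHb y.1 y.2.1)
      · exact hHb _ _
      · exact hHb _ _
  rw [Measure.volume_eq_prod, ← integral_integral_swap hint]
  refine integral_congr_ae (ae_of_all _ fun ξ => ?_)
  simp only [parabolaTransform]
  rw [← integral_conj, mul_assoc, ← integral_prod_mul, ← integral_const_mul]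
  refine integral_congr_ae (ae_of_all _ fun z => ?_)
  simp only [map_mul, ← Complex.exp_conj, Complex.conj_I, Complex.conj_ofReal]
  have e : Complex.exp (-((ε : ℂ) - (z.1 - z.2 : ℝ) * Complex.I) * (ξ : ℂ) ^ 2) =
      Complex.exp (-(ε : ℂ) * (ξ : ℂ) ^ 2) * Complex.exp ((ξ ^ 2 * z.1 : ℝ) * Complex.I) *
        Complex.exp ((ξ ^ 2 * z.2 : ℝ) * -Complex.I) := by
    rw [← Complex.exp_add, ← Complex.exp_add]
    congr 1
    push_cast
    ring
  rw [e]
  ring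

lemma lintegral_slice_rpow_le (hW0 : ∀ x, 0 ≤ W x) (hW1 : ∀ x, W x ≤ 1) (hV0 : ∀ t, 0 ≤ V t)
    (hC : 0 ≤ C) (hu : ∀ x t, ‖u x t‖ ≤ C * (W x * V t)) {s : ℝ} (hs : 1 ≤ s) (t : ℝ) :
    (∫⁻ x, ‖u x t‖ₑ ^ s ∂powMeasure a) ^ (1 / s) ≤
      ENNReal.ofReal (C * V t) * (∫⁻ x, ENNReal.ofReal (W x) ∂powMeasure a) ^ (1 / s) := by
  have hs0 : 0 < s := by linarith
  have hCV : 0 ≤ C * V t := mul_nonneg hC (hV0 t)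
  have h : ∫⁻ x, ‖u x t‖ₑ ^ s ∂powMeasure a ≤
      ENNReal.ofReal (C * V t) ^ s * ∫⁻ x, ENNReal.ofReal (W x) ∂powMeasure a := by
    rw [ENNReal.ofReal_rpow_of_nonneg hCV hs0.le,
      ← lintegral_const_mul' _ _ ENNReal.ofReal_ne_top]
    refine lintegral_mono fun x => ?_
    rw [← ofReal_norm, ENNReal.ofReal_rpow_of_nonneg (norm_nonneg _) hs0.le,
      ← ENNReal.ofReal_mul (by positivity)]
    refine ENNReal.ofReal_le_ofReal ?_
    calc ‖u x t‖ ^ s ≤ (C * V t * W x) ^ s := by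
          gcongr
          exact (hu x t).trans_eq (by ring)
      _ = (C * V t) ^ s * W x ^ s := Real.mul_rpow hCV (hW0 x)
      _ ≤ (C * V t) ^ s * W x := by
        have h1 := Real.rpow_le_rpow_of_exponent_ge' (hW0 x) (hW1 x) zero_le_one hs
        rw [Real.rpow_one] at h1
        gcongr
  calc _ ≤ (ENNReal.ofReal (C * V t) ^ s * ∫⁻ x, ENNReal.ofReal (W x) ∂powMeasure a) ^ (1 / s) :=
        ENNReal.rpow_le_rpow h (by positivity)
    _ = _ := by
      rw [ENNReal.mul_rpow_of_nonneg _ _ (by positivity), ← ENNReal.rpow_mul,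
        mul_one_div_cancel hs0.ne', ENNReal.rpow_one]

end Decay

section RestrictionBound

variable {a : ℝ} {u : ℝ → ℝ → ℂ} {W V : ℝ → ℝ} {C : ℝ}

lemma measurable_lintegral_slice_rpow
    (hum : Measurable fun z : ℝ × ℝ => u z.1 z.2) (s : ℝ) :
    Measurable fun t => (∫⁻ x, ‖u x t‖ₑ ^ s ∂powMeasure a) ^ (1 / s) := by
  refine Measurable.pow_const (Measurable.lintegral_prod_right' (ν := powMeasure a)
    (f := fun z : ℝ × ℝ => ‖u z.2 z.1‖ₑ ^ s) ?_) _
  exact ((hum.comp measurable_swap).enorm).pow_const _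

lemma lintegral_slice_rpow_ne_top (hW : Integrable W (powMeasure a)) (hW0 : ∀ x, 0 ≤ W x)
    (hW1 : ∀ x, W x ≤ 1) (hV0 : ∀ t, 0 ≤ V t)
    (hC : 0 ≤ C) (hu : ∀ x t, ‖u x t‖ ≤ C * (W x * V t)) {s : ℝ} (hs : 1 ≤ s) (t : ℝ) :
    (∫⁻ x, ‖u x t‖ₑ ^ s ∂powMeasure a) ^ (1 / s) ≠ ⊤ :=
  ne_top_of_le_ne_top (ENNReal.mul_ne_top ENNReal.ofReal_ne_top
      (ENNReal.rpow_ne_top_of_nonneg (by positivity) hW.lintegral_lt_top.ne))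
    (lintegral_slice_rpow_le hW0 hW1 hV0 hC hu hs t)

lemma lintegral_lintegral_slice_rpow_ne_top (hW : Integrable W (powMeasure a))
    (hW0 : ∀ x, 0 ≤ W x) (hW1 : ∀ x, W x ≤ 1) (hV : Integrable V) (hV0 : ∀ t, 0 ≤ V t)
    (hV1 : ∀ t, V t ≤ 1) (hC : 0 ≤ C) (hu : ∀ x t, ‖u x t‖ ≤ C * (W x * V t)) {s p : ℝ}
    (hs : 1 ≤ s) (hp : 1 ≤ p) :
    ∫⁻ t, ((∫⁻ x, ‖u x t‖ₑ ^ s ∂powMeasure a) ^ (1 / s)) ^ p ≠ ⊤ := by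
  have hp0 : 0 ≤ p := by linarith
  set M := (∫⁻ x, ENNReal.ofReal (W x) ∂powMeasure a) ^ (1 / s) with hM
  have hMt : M ≠ ⊤ := ENNReal.rpow_ne_top_of_nonneg (by positivity) hW.lintegral_lt_top.ne
  refine ne_top_of_le_ne_top (b := (ENNReal.ofReal C * M) ^ p * ∫⁻ t, ENNReal.ofReal (V t)) ?_ ?_
  · exact ENNReal.mul_ne_top (ENNReal.rpow_ne_top_of_nonneg hp0
      (ENNReal.mul_ne_top ENNReal.ofReal_ne_top hMt)) hV.lintegral_lt_top.ne
  · rw [← lintegral_const_mul' _ _ (ENNReal.rpow_ne_top_of_nonneg hp0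
      (ENNReal.mul_ne_top ENNReal.ofReal_ne_top hMt))]
    refine lintegral_mono fun t => ?_
    calc _ ≤ (ENNReal.ofReal (C * V t) * M) ^ p := by
          gcongr
          exact lintegral_slice_rpow_le hW0 hW1 hV0 hC hu hs t
      _ = (ENNReal.ofReal C * M) ^ p * ENNReal.ofReal (V t) ^ p := by
        rw [← ENNReal.mul_rpow_of_nonneg _ _ hp0, ENNReal.ofReal_mul hC]
        ring_nf
      _ ≤ (ENNReal.ofReal C * M) ^ p * ENNReal.ofReal (V t) := by
        gcongr
        rw [ENNReal.ofReal_rpow_of_nonneg (hV0 t) hp0]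
        refine ENNReal.ofReal_le_ofReal ?_
        simpa using Real.rpow_le_rpow_of_exponent_ge' (hV0 t) (hV1 t) zero_le_one hp

/-- The `TT*` form of the restriction estimate. -/
theorem exists_lintegral_parabolaTransform_sq_le {q r : ℝ} (ha : 0 ≤ a) (hr : 2 < r) (hq : 2 < q)
    (hqr : 2 / q = (a + 1) * (1 / 2 - 1 / r)) :
    ∃ K : ENNReal, K ≠ ⊤ ∧ ∀ (u : ℝ → ℝ → ℂ) (W V : ℝ → ℝ) (C : ℝ),
      (Measurable fun z : ℝ × ℝ => u z.1 z.2) → Integrable W (powMeasure a) →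
      (∀ x, 0 ≤ W x) → (∀ x, W x ≤ 1) → Integrable V → (∀ t, 0 ≤ V t) → (∀ t, V t ≤ 1) →
      0 ≤ C → (∀ x t, ‖u x t‖ ≤ C * (W x * V t)) →
      ∫⁻ ξ, ‖parabolaTransform a u ξ‖ₑ ^ 2 ∂powMeasure a ≤
        K * (∫⁻ t, ((∫⁻ x, ‖u x t‖ₑ ^ (r / (r - 1)) ∂powMeasure a) ^ (1 / (r / (r - 1)))) ^
          (q / (q - 1))) ^ (2 / (q / (q - 1))) := by
  obtain ⟨D, hD, hbound⟩ := exists_enorm_integral_cexp_mul_besselTransform_le ha hr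
  refine ⟨D * ENNReal.ofReal (2 * (2 / (1 - 2 / q) + 2 ^ (1 / q))),
    ENNReal.mul_ne_top hD ENNReal.ofReal_ne_top, ?_⟩
  intro u W V C hum hW hW0 hW1 hV hV0 hV1 hC hu
  set s := r / (r - 1) with hs_def
  have hs : 1 ≤ s := by rw [hs_def, le_div_iff₀ (by linarith)]; linarith
  have hp : 1 ≤ q / (q - 1) := by rw [le_div_iff₀ (by linarith)]; linarith
  set N : ℝ → ENNReal := fun t => (∫⁻ x, ‖u x t‖ₑ ^ s ∂powMeasure a) ^ (1 / s) with hN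
  have hNt : ∀ t, N t ≠ ⊤ := lintegral_slice_rpow_ne_top hW hW0 hW1 hV0 hC hu hs
  have hNm : Measurable N := measurable_lintegral_slice_rpow hum s
  have hNp : ∫⁻ t, N t ^ (q / (q - 1)) ≠ ⊤ :=
    lintegral_lintegral_slice_rpow_ne_top hW hW0 hW1 hV hV0 hV1 hC hu hs hp
  have hsl : ∀ t, Measurable fun x => u x t := fun t =>
    hum.comp (measurable_id.prodMk measurable_const)
  have hsf : ∀ t, ∫⁻ x, ‖u x t‖ₑ ^ s ∂powMeasure a ≠ ⊤ := fun t h => by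
    apply hNt t
    simp only [hN, h]
    exact ENNReal.top_rpow_of_pos (by positivity)
  refine lintegral_enorm_sq_le_of_forall ha (stronglyMeasurable_parabolaTransform ha hum).measurable
    (norm_parabolaTransform_le ha hum hW hV hu) fun ε hε => ?_
  rw [integral_exp_mul_parabolaTransform_mul_conj ha hum hW hV hu hε]
  have hls := lintegral_lintegral_rpow_abs_sub_le (h := fun t => (N t).toReal) hq
    hNm.ennreal_toReal (fun t => ENNReal.toReal_nonneg)
    (by simpa only [ENNReal.ofReal_toReal (hNt _)] using hNp)
  simp only [ENNReal.ofReal_toReal (hNt _)] at hls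
  calc _ ≤ ∫⁻ z : ℝ × ℝ, ‖∫ ξ, Complex.exp (-((ε : ℂ) - (z.1 - z.2 : ℝ) * Complex.I) *
          (ξ : ℂ) ^ 2) * besselTransform a (fun x => u x z.1) ξ *
          (starRingEnd ℂ) (besselTransform a (fun x => u x z.2) ξ) ∂powMeasure a‖ₑ :=
        enorm_integral_le_lintegral_enorm _
    _ ≤ ∫⁻ z : ℝ × ℝ, D * (ENNReal.ofReal
          (‖(ε : ℂ) - (z.1 - z.2 : ℝ) * Complex.I‖ ^ (-(2 / q))) * (N z.1 * N z.2)) := by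
        refine lintegral_mono fun z => ?_
        rw [hqr]
        exact hbound _ _ _ (by simpa using hε) (hsl _) (hsl _) (integrable_slice hum hW hu _)
          (integrable_slice hum hW hu _) (hsf _)
    _ = D * ∫⁻ t, ∫⁻ t', ENNReal.ofReal
          (‖(ε : ℂ) - (t - t' : ℝ) * Complex.I‖ ^ (-(2 / q))) * (N t * N t') := by
        rw [lintegral_const_mul' _ _ hD, Measure.volume_eq_prod, lintegral_prod]
        refine Measurable.aemeasurable (Measurable.mul ?_
          ((hNm.comp measurable_fst).mul (hNm.comp measurable_snd)))
        exact ((Continuous.measurable (by fun_prop)).pow_const _).ennreal_ofReal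
    _ ≤ D * ∫⁻ t, ∫⁻ t', N t * (N t' * ENNReal.ofReal (|t - t'| ^ (-(2 / q)))) := by
        refine mul_le_mul_right (lintegral_mono fun t => ?_) D
        refine lintegral_mono_ae ?_
        filter_upwards [compl_mem_ae_iff.2 (measure_singleton t)] with t' ht'
        have hne : 0 < |t - t'| := abs_pos.2 (sub_ne_zero.2 (Ne.symm ht'))
        have hle : |t - t'| ≤ ‖(ε : ℂ) - (t - t' : ℝ) * Complex.I‖ := by
          simpa [abs_sub_comm] using Complex.abs_im_le_norm ((ε : ℂ) - (t - t' : ℝ) * Complex.I)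
        have := Real.rpow_le_rpow_of_nonpos hne hle (z := -(2 / q))
          (neg_nonpos.2 (by positivity))
        calc _ ≤ ENNReal.ofReal (|t - t'| ^ (-(2 / q))) * (N t * N t') := by gcongr
          _ = _ := by ring
    _ ≤ D * (ENNReal.ofReal (2 * (2 / (1 - 2 / q) + 2 ^ (1 / q))) *
          (∫⁻ t, N t ^ (q / (q - 1))) ^ (2 / (q / (q - 1)))) := by gcongr
    _ = _ := by rw [mul_assoc]

end RestrictionBound

lemma besselJ_eq_rpow_mul_besselKernel (a : ℝ) {z : ℝ} (hz : 0 < z) :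
    besselJ (((a - 1) / 2 : ℝ) : ℂ) z =
      (((z / 2) ^ ((a - 1) / 2) * besselKernel ((a + 1) / 2) z : ℝ) : ℂ) := by
  have hz2 : ((z / 2 : ℝ) : ℂ) ≠ 0 := by exact_mod_cast (half_pos hz).ne'
  unfold besselJ besselKernel
  rw [Complex.ofReal_mul, Complex.ofReal_tsum, ← tsum_mul_left]
  refine tsum_congr fun k => ?_
  have hG : Complex.Gamma ((((a - 1) / 2 : ℝ) : ℂ) + k + 1) =
      (Real.Gamma ((a + 1) / 2 + k) : ℂ) := by
    rw [← Complex.Gamma_ofReal]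
    congr 1
    push_cast
    ring
  have hc : ((z : ℂ) / 2) ^ (2 * (k : ℂ) + (((a - 1) / 2 : ℝ) : ℂ)) =
      (((z / 2) ^ (2 * k) * (z / 2) ^ ((a - 1) / 2) : ℝ) : ℂ) := by
    have : (z : ℂ) / 2 = ((z / 2 : ℝ) : ℂ) := by push_cast; rfl
    rw [this, Complex.cpow_add _ _ hz2, Complex.ofReal_mul,
      Complex.ofReal_cpow (half_pos hz).le, ← Nat.cast_ofNat (R := ℂ) (n := 2), ← Nat.cast_mul,
      Complex.cpow_natCast, Complex.ofReal_pow]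
  rw [hG, hc, Complex.Gamma_nat_eq_factorial]
  unfold besselCoeff
  push_cast
  rw [neg_pow (((z : ℂ) ^ 2 / 4)), pow_mul, div_pow]
  norm_num
  ring

lemma hankel_eq_besselTransform (a : ℝ) (φ : ℝ → ℂ) {ξ : ℝ} (hξ : 0 < ξ) :
    hankel (((a - 1) / 2 : ℝ) : ℂ) φ ξ =
      ((2 : ℝ) ^ (-((a - 1) / 2)) : ℝ) * besselTransform a φ ξ := by
  unfold hankel besselTransform
  rw [integral_powMeasure, ← integral_const_mul, ← integral_const_mul]
  refine setIntegral_congr_fun measurableSet_Ioi fun y (hy : 0 < y) => ?_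
  have h1 : (y : ℂ) ^ ((((a - 1) / 2 : ℝ) : ℂ) + 1) = ((y ^ ((a - 1) / 2 + 1) : ℝ) : ℂ) := by
    rw [Complex.ofReal_cpow hy.le]
    push_cast
    rfl
  have h2 : (ξ : ℂ) ^ (-(((a - 1) / 2 : ℝ) : ℂ)) = ((ξ ^ (-((a - 1) / 2)) : ℝ) : ℂ) := by
    rw [Complex.ofReal_cpow hξ.le]
    push_cast
    rfl
  have h3 : ξ ^ (-((a - 1) / 2)) * ((ξ * y / 2) ^ ((a - 1) / 2) * y ^ ((a - 1) / 2 + 1)) =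
      2 ^ (-((a - 1) / 2)) * y ^ a := by
    have e : y ^ a = y ^ ((a - 1) / 2) * y ^ ((a - 1) / 2 + 1) := by
      rw [← Real.rpow_add hy]
      ring_nf
    have hξν : ξ ^ ((a - 1) / 2) ≠ 0 := (Real.rpow_pos_of_pos hξ _).ne'
    rw [e, Real.div_rpow (by positivity) (by norm_num), Real.mul_rpow hξ.le hy.le,
      Real.rpow_neg hξ.le, Real.rpow_neg (by norm_num)]
    field_simp
  simp only [besselJ_eq_rpow_mul_besselKernel a (mul_pos hξ hy), h1, h2, Complex.real_smul]
  rw [← mul_assoc (((2 : ℝ) ^ (-((a - 1) / 2)) : ℝ) : ℂ), ← Complex.ofReal_mul, ← h3]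
  push_cast
  ring

lemma fourierHankel_eq_parabolaTransform {a : ℝ} {F u : ℝ → ℝ → ℂ}
    (hFu : ∀ x > 0, ∀ t, u x t = F x t) {ξ : ℝ} (hξ : 0 < ξ) :
    fourierHankel (((a - 1) / 2 : ℝ) : ℂ) F ξ (-ξ ^ 2 / (2 * Real.pi)) =
      ((2 : ℝ) ^ (-((a - 1) / 2)) : ℝ) * parabolaTransform a u ξ := by
  unfold fourierHankel parabolaTransform
  rw [← integral_const_mul]
  refine integral_congr_ae (ae_of_all _ fun t => ?_)
  have hB : besselTransform a (fun x => F x t) ξ = besselTransform a (fun x => u x t) ξ := by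
    refine integral_congr_ae ?_
    filter_upwards [ae_powMeasure_pos a] with x hx
    simp only [hFu x hx]
  have he : -(((2 * Real.pi * (-ξ ^ 2 / (2 * Real.pi)) * t : ℝ)) : ℂ) = ((ξ ^ 2 * t : ℝ) : ℂ) := by
    rw [← Complex.ofReal_neg]
    congr 1
    field_simp
  simp only [he, hankel_eq_besselTransform a _ hξ, hB]
  ring

lemma two_lt_of_admissible {a q r : ℝ} (ha : 0 ≤ a) (h : Admissible a q r) : 2 < q := by
  obtain ⟨hr, hra, hqr⟩ := h
  have hr0 : 0 < r := by linarith
  have h0 : 0 < 2 / q := by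
    rw [hqr]
    have : 1 / r < 1 / 2 := one_div_lt_one_div_of_lt two_pos hr
    exact mul_pos (by linarith) (by linarith)
  have hq : 0 < q := by
    by_contra hq
    exact absurd h0 (not_lt.2 (div_nonpos_of_nonneg_of_nonpos zero_le_two (not_lt.1 hq)))
  have h1 : 2 / q < 1 := by
    rw [hqr]
    have e : (a + 1) * (1 / 2 - 1 / r) = ((a + 1) * (r - 2)) / (2 * r) := by field_simp
    rw [e, div_lt_one (by positivity)]
    rcases le_or_gt a 1 with h | h
    · nlinarith
    · have := hra h
      rw [lt_div_iff₀ (by linarith)] at this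
      nlinarith
  rwa [div_lt_one hq] at h1

lemma integrable_inv_one_add_sq_pow_powMeasure {a : ℝ} (ha : 0 ≤ a) {m : ℕ} (hm : a / 2 + 1 ≤ m) :
    Integrable (fun x : ℝ => ((1 + x ^ 2) ^ m)⁻¹) (powMeasure a) := by
  rw [integrable_powMeasure_iff]
  refine (integrable_inv_one_add_sq.integrableOn (s := Ioi 0)).mono' ?_ ?_
  · refine Measurable.aestronglyMeasurable ?_
    have : Measurable fun x : ℝ => ((1 + x ^ 2) ^ m)⁻¹ := by fun_prop
    exact (measurable_id.pow_const a).smul this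
  · refine (ae_restrict_iff' measurableSet_Ioi).2 (ae_of_all _ fun x (hx : 0 < x) => ?_)
    have h1 : (1 : ℝ) ≤ 1 + x ^ 2 := by nlinarith
    have h2 : x ^ a ≤ (1 + x ^ 2) ^ (a / 2) := by
      have : x ^ a = (x ^ 2) ^ (a / 2) := by
        rw [← Real.rpow_natCast, ← Real.rpow_mul hx.le]
        congr 1
        push_cast
        ring
      rw [this]
      gcongr
      linarith
    have h3 : x ^ a * (1 + x ^ 2) ≤ (1 + x ^ 2) ^ m := by
      calc x ^ a * (1 + x ^ 2) ≤ (1 + x ^ 2) ^ (a / 2) * (1 + x ^ 2) := by gcongr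
        _ = (1 + x ^ 2) ^ (a / 2 + 1) := by rw [Real.rpow_add_one (by positivity)]
        _ ≤ (1 + x ^ 2) ^ (m : ℝ) := Real.rpow_le_rpow_of_exponent_le h1 hm
        _ = _ := Real.rpow_natCast _ _
    rw [smul_eq_mul, Real.norm_of_nonneg (by positivity), ← div_eq_mul_inv, div_le_iff₀
      (by positivity), inv_mul_eq_div, le_div_iff₀ (by positivity)]
    exact h3

lemma SPlusT.exists_norm_le {F : ℝ → ℝ → ℂ} (hF : SPlusT F) (m : ℕ) :
    ∃ C : ℝ, 0 ≤ C ∧ ∀ x > 0, ∀ t, ‖F x t‖ ≤ C * (((1 + x ^ 2) ^ m)⁻¹ * (1 + t ^ 2)⁻¹) := by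
  obtain ⟨C, hC⟩ := hF.2 (2 * (m + 1))
  have h : ∀ x > 0, ∀ t, (1 + x ^ 2 + t ^ 2) ^ (m + 1) * ‖F x t‖ ≤ C := by
    intro x hx t
    have := hC 0 0 (by omega) x hx t
    simp only [DxIter, DtIter, iteratedDeriv_zero] at this
    rwa [show ((2 * (m + 1) : ℕ) : ℝ) / 2 = ((m + 1 : ℕ) : ℝ) by push_cast; ring,
      Real.rpow_natCast] at this
  refine ⟨C, le_trans (by positivity) (h 1 one_pos 0), fun x hx t => ?_⟩
  rw [← mul_inv, ← div_eq_mul_inv, le_div_iff₀ (by positivity)]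
  refine le_trans ?_ (h x hx t)
  rw [mul_comm, pow_succ _ m]
  have h1 : 1 + x ^ 2 ≤ 1 + x ^ 2 + t ^ 2 := by nlinarith
  have h2 : 1 + t ^ 2 ≤ 1 + x ^ 2 + t ^ 2 := by nlinarith
  exact mul_le_mul_of_nonneg_right (mul_le_mul (pow_le_pow_left₀ (by positivity) h1 m) h2
    (by positivity) (by positivity)) (norm_nonneg _)

lemma SPlusT.measurable_indicator {F : ℝ → ℝ → ℂ} (hF : SPlusT F) :
    Measurable ((Ioi (0 : ℝ) ×ˢ (univ : Set ℝ)).indicator fun p : ℝ × ℝ => F p.1 p.2) := by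
  rw [← piecewise_eq_indicator]
  exact hF.1.continuousOn.measurable_piecewise continuousOn_const
    (measurableSet_Ioi.prod MeasurableSet.univ)

lemma integral_rpow_norm_powMeasure (a : ℝ) {f : ℝ → ℂ} (hf : Measurable f) {s : ℝ} (hs : 0 ≤ s) :
    ∫ x, ‖f x‖ ^ s ∂powMeasure a = (∫⁻ x, ‖f x‖ₑ ^ s ∂powMeasure a).toReal := by
  rw [integral_eq_lintegral_of_nonneg_ae (ae_of_all _ fun x => by positivity)
    (hf.norm.pow_const s).aestronglyMeasurable]
  congr 1
  refine lintegral_congr fun x => ?_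
  rw [← ofReal_norm, ENNReal.ofReal_rpow_of_nonneg (norm_nonneg _) hs]

lemma LrA_eq_toReal {a s : ℝ} {f g : ℝ → ℂ} (hs : 0 ≤ s) (hg : Measurable g)
    (hfg : ∀ x > 0, g x = f x) :
    LrA a s f = ((∫⁻ x, ‖g x‖ₑ ^ s ∂powMeasure a) ^ (1 / s)).toReal := by
  rw [← ENNReal.toReal_rpow, ← integral_rpow_norm_powMeasure a hg hs, integral_powMeasure, LrA]
  congr 1
  refine setIntegral_congr_fun measurableSet_Ioi fun x (hx : 0 < x) => ?_
  simp only [smul_eq_mul, hfg x hx, mul_comm]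

/-- Restriction estimate on the half-parabola: for `a ≥ 0` and an `a`-admissible pair `(q,r)`,
`(∫₀^∞ |𝓗̃_{(a-1)/2}(F)(ξ,-ξ²/(2π))|² ξ^a dξ)^{1/2} ≤ C(a,r) ‖F‖_{L^{q'}_t L^{r'}_a}`. -/
theorem restriction_estimate (a q r : ℝ) (ha : 0 ≤ a) (hadm : Admissible a q r) :
    ∃ C > (0:ℝ), ∀ F : ℝ → ℝ → ℂ, SPlusT F →
      (∫ ξ in Ioi (0:ℝ),
          ‖fourierHankel (((a - 1) / 2 : ℝ) : ℂ) F ξ (-ξ ^ 2 / (2 * Real.pi))‖ ^ 2 * ξ ^ a) ^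
          ((1:ℝ) / 2) ≤
        C * mixedNorm a (q / (q - 1)) (r / (r - 1)) F := by
  have hq := two_lt_of_admissible ha hadm
  obtain ⟨hr, -, hqr⟩ := hadm
  obtain ⟨K, hK, hbound⟩ := exists_lintegral_parabolaTransform_sq_le ha hr hq hqr
  set c : ℝ := 2 ^ (-((a - 1) / 2)) with hc
  set s := r / (r - 1) with hs_def
  set p := q / (q - 1) with hp_def
  have hs : 1 ≤ s := by rw [hs_def, le_div_iff₀ (by linarith)]; linarith
  have hp : 1 ≤ p := by rw [hp_def, le_div_iff₀ (by linarith)]; linarith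
  refine ⟨(‖(c : ℂ)‖ₑ ^ 2 * K).toReal ^ ((1 : ℝ) / 2) + 1, by positivity, fun F hF => ?_⟩
  obtain ⟨m, hm⟩ := exists_nat_ge (a / 2 + 1)
  obtain ⟨C, hC, hFC⟩ := hF.exists_norm_le m
  set u : ℝ → ℝ → ℂ := fun x t =>
    (Ioi (0 : ℝ) ×ˢ (univ : Set ℝ)).indicator (fun p : ℝ × ℝ => F p.1 p.2) (x, t) with hu_def
  have hum : Measurable fun z : ℝ × ℝ => u z.1 z.2 := hF.measurable_indicator
  have huF : ∀ x > 0, ∀ t, u x t = F x t := fun x hx t =>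
    indicator_of_mem (mk_mem_prod hx (mem_univ t)) _
  set W : ℝ → ℝ := fun x => ((1 + x ^ 2) ^ m)⁻¹ with hW_def
  set V : ℝ → ℝ := fun t => (1 + t ^ 2)⁻¹ with hV_def
  have hW0 : ∀ x, 0 ≤ W x := fun x => by positivity
  have hV0 : ∀ t, 0 ≤ V t := fun t => by positivity
  have hW1 : ∀ x, W x ≤ 1 := fun x =>
    inv_le_one_of_one_le₀ (one_le_pow₀ (by nlinarith [sq_nonneg x]))
  have hV1 : ∀ t, V t ≤ 1 := fun t => inv_le_one_of_one_le₀ (by nlinarith [sq_nonneg t])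
  have hW : Integrable W (powMeasure a) := integrable_inv_one_add_sq_pow_powMeasure ha hm
  have hu : ∀ x t, ‖u x t‖ ≤ C * (W x * V t) := by
    intro x t
    by_cases hx : 0 < x
    · rw [huF x hx]
      exact hFC x hx t
    · have : u x t = 0 := indicator_of_notMem (fun h => hx h.1) _
      rw [this, norm_zero]
      exact mul_nonneg hC (mul_nonneg (hW0 x) (hV0 t))
  have hV : Integrable V := integrable_inv_one_add_sq
  have hmain := hbound u W V C hum hW hW0 hW1 hV hV0 hV1 hC hu
  have hNt := lintegral_slice_rpow_ne_top hW hW0 hW1 hV0 hC hu hs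
  have hX := lintegral_lintegral_slice_rpow_ne_top hW hW0 hW1 hV hV0 hV1 hC hu hs hp
  have hNm := measurable_lintegral_slice_rpow (a := a) hum s
  have hmix : mixedNorm a p s F =
      (∫⁻ t, ((∫⁻ x, ‖u x t‖ₑ ^ s ∂powMeasure a) ^ (1 / s)) ^ p).toReal ^ (1 / p) := by
    unfold mixedNorm
    congr 1
    rw [← integral_toReal (hNm.pow_const p).aemeasurable
      (ae_of_all _ fun t => ENNReal.rpow_lt_top_of_nonneg (by positivity) (hNt t))]
    refine integral_congr_ae (ae_of_all _ fun t => ?_)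
    simp only
    rw [LrA_eq_toReal (by linarith) (hum.comp (measurable_id.prodMk measurable_const))
      (fun x hx => huF x hx t), ENNReal.toReal_rpow]
    rfl
  set X := ∫⁻ t, ((∫⁻ x, ‖u x t‖ₑ ^ s ∂powMeasure a) ^ (1 / s)) ^ p with hX_def
  have hleft : ∫ ξ in Ioi (0 : ℝ),
      ‖fourierHankel (((a - 1) / 2 : ℝ) : ℂ) F ξ (-ξ ^ 2 / (2 * Real.pi))‖ ^ 2 * ξ ^ a =
      (‖(c : ℂ)‖ₑ ^ 2 * ∫⁻ ξ, ‖parabolaTransform a u ξ‖ₑ ^ 2 ∂powMeasure a).toReal := by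
    have hG := (stronglyMeasurable_parabolaTransform ha hum).measurable
    have h2 := integral_rpow_norm_powMeasure a (hG.const_mul (c : ℂ)) zero_le_two
    simp only [Real.rpow_two, ENNReal.rpow_two, enorm_mul, mul_pow] at h2
    rw [lintegral_const_mul _ (hG.enorm.pow_const 2), integral_powMeasure] at h2
    rw [← h2]
    refine setIntegral_congr_fun measurableSet_Ioi fun ξ (hξ : 0 < ξ) => ?_
    simp only [fourierHankel_eq_parabolaTransform huF hξ, smul_eq_mul]
    rw [mul_comm]
  rw [hleft, hmix]
  have hXp : X ^ (2 / p) ≠ ⊤ := ENNReal.rpow_ne_top_of_nonneg (by positivity) hX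
  have hcK : ‖(c : ℂ)‖ₑ ^ 2 * K ≠ ⊤ := ENNReal.mul_ne_top (by simp) hK
  calc _ ≤ (‖(c : ℂ)‖ₑ ^ 2 * K * X ^ (2 / p)).toReal ^ ((1 : ℝ) / 2) := by
        refine Real.rpow_le_rpow ENNReal.toReal_nonneg (ENNReal.toReal_mono
          (ENNReal.mul_ne_top hcK hXp) ?_) (by norm_num)
        rw [mul_assoc]
        gcongr
    _ = (‖(c : ℂ)‖ₑ ^ 2 * K).toReal ^ ((1 : ℝ) / 2) * X.toReal ^ (1 / p) := by
        rw [ENNReal.toReal_mul, Real.mul_rpow ENNReal.toReal_nonneg ENNReal.toReal_nonneg,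
          ← ENNReal.toReal_rpow, ← Real.rpow_mul ENNReal.toReal_nonneg]
        congr 2
        ring
    _ ≤ _ := by
        gcongr
        linarith
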